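/- Let a and b be nonzero integers with gcd(a,b) = 1 and |a − b| ≠ 1, and set d := a/b. Then for every compact set K contained in the open strip D := {s ∈ ℂ : 1/2 < Re(s) < 1} and every ε > 0, one has liminf_{T→∞} (1/T)·μ{τ ∈ [0,T] : sup_{s∈K} |ζ(s+iτ) − ζ(s+idτ)| < ε} > 0. -/

import Mathlib

open MeasureTheory Filter Complex
open scoped ENNReal

/-- The open strip `D = {s : 1/2 < Re s < 1}`. -/
def strip : Set ℂ := {s : ℂ | 1/2 < s.re ∧ s.re < 1}

/-- Lower density of a set of real numbers:
`liminf_{T→∞} (1/T)·μ(S ∩ [0,T])`. -/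
noncomputable def lowerDens (S : Set ℝ) : ℝ :=
  liminf (fun T : ℝ => (volume (S ∩ Set.Icc 0 T)).toReal / T) atTop

/-- `sup_{s ∈ K} |f s|`, valued in `ℝ≥0∞`. -/
noncomputable def supNorm (K : Set ℂ) (f : ℂ → ℂ) : ℝ≥0∞ :=
  ⨆ s ∈ K, (‖f s‖₊ : ℝ≥0∞)

/-!
For `τ = b * t` the two shifts are `i * b * t` and `i * a * t`. As `a` and `b` are coprime and
`|a - b| ≠ 1`, some root of unity `ω` satisfies `ω ^ a = ω ^ b = ρ ≠ 1`. If `p_k ^ (-i * t)` is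
close to `ω ^ k` for all `k < n`, then both partial Euler products, at `s + i * a * t` and at
`s + i * b * t`, are close to `∏ k < n, (1 - ρ ^ k * p_k ^ (-s))⁻¹`, and by Abel summation this is
bounded uniformly in `n`, as `ρ ≠ 1`. Hence the two zeta values are close as soon as both tails
`ζ(w) * ∏ k < n, (1 - p_k ^ (-w)) - 1` are small.

The density of such `t` depends on `n`, so the tails have to be controlled on that very set and not
just on average. This is done with a Fejér-type weight `|S(t)| ^ 2`, where `S` is a Dirichlet
polynomial over integers `m` composed of the first `n` primes. The tail is close in mean square to a
sum over integers `r > 1` free of these primes, and the frequencies `log m + c * log r` are pairwise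
distinct for `c ≠ 0`, so that Parseval decouples weight and tail. The mean value property turns the
resulting mean square bound into a uniform one.
-/

/-! ### The Gaussian large sieve -/

lemma integral_gaussian_mul_cexp {T : ℝ} (hT : 0 < T) (x : ℝ) :
    ∫ u : ℝ, (Real.exp (-(u / T) ^ 2) : ℂ) * cexp (-(I * u * x)) =
      (T * √Real.pi * Real.exp (-(T * x) ^ 2 / 4) : ℝ) := by
  have hre : 0 < ((1 / T ^ 2 : ℝ) : ℂ).re := by rw [ofReal_re]; positivity
  have hft := fourierIntegral_gaussian hre (-x : ℂ)
  have hsqrt : ((Real.pi : ℂ) / ((1 / T ^ 2 : ℝ) : ℂ)) ^ (1 / 2 : ℂ) = (T * √Real.pi : ℝ) := by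
    rw [show (Real.pi : ℂ) / ((1 / T ^ 2 : ℝ) : ℂ) = (Real.pi * T ^ 2 : ℝ) by push_cast; field_simp,
      show (1 / 2 : ℂ) = ((1 / 2 : ℝ) : ℂ) by push_cast; ring, ← ofReal_cpow (by positivity),
      ← Real.sqrt_eq_rpow, Real.sqrt_mul Real.pi_pos.le, Real.sqrt_sq hT.le, mul_comm]
  have hT' : (T : ℂ) ≠ 0 := by exact_mod_cast hT.ne'
  rw [hsqrt] at hft
  rw [ofReal_mul, ofReal_exp]
  convert hft using 2
  · ext u
    rw [mul_comm, ofReal_exp]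
    congr 2
    · ring
    · push_cast; field_simp
  · congr 1; push_cast; field_simp

lemma norm_cexp_neg_I_mul_mul (u x : ℝ) : ‖cexp (-(I * u * x))‖ = 1 := by
  rw [show -(I * u * x) = ((-(u * x) : ℝ) : ℂ) * I by push_cast; ring, norm_exp_ofReal_mul_I]

lemma conj_cexp_neg_I_mul_mul (u x : ℝ) :
    (starRingEnd ℂ) (cexp (-(I * u * x))) = cexp (I * u * x) := by
  rw [← exp_conj]; simp

lemma integrable_gaussian {T : ℝ} (hT : T ≠ 0) :
    Integrable fun u : ℝ => Real.exp (-(u / T) ^ 2) := by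
  convert integrable_exp_neg_mul_sq (b := 1 / T ^ 2) (by positivity) using 3
  field_simp

lemma intervalIntegral_le_integral_gaussian {T : ℝ} (hT : 0 < T) {φ : ℝ → ℝ} (hφ : Continuous φ)
    (hφ0 : ∀ u, 0 ≤ φ u) (hint : Integrable fun u => Real.exp (-(u / T) ^ 2) * φ u) :
    ∫ u in (-T)..T, φ u ≤ Real.exp 1 * ∫ u, Real.exp (-(u / T) ^ 2) * φ u := by
  rw [intervalIntegral.integral_of_le (by linarith), ← integral_const_mul]
  calc ∫ u in Set.Ioc (-T) T, φ u
      ≤ ∫ u in Set.Ioc (-T) T, Real.exp 1 * (Real.exp (-(u / T) ^ 2) * φ u) := by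
        refine setIntegral_mono_on (hφ.integrableOn_Icc.mono_set Set.Ioc_subset_Icc_self)
          (hint.const_mul _).integrableOn measurableSet_Ioc fun u hu => ?_
        have hu1 : (u / T) ^ 2 ≤ 1 := by
          rw [sq_le_one_iff_abs_le_one, abs_div, abs_of_pos hT, div_le_one hT, abs_le]
          exact ⟨hu.1.le, hu.2⟩
        rw [← mul_assoc, ← Real.exp_add]
        exact le_mul_of_one_le_left (hφ0 u) (Real.one_le_exp (by linarith))
    _ ≤ ∫ u, Real.exp 1 * (Real.exp (-(u / T) ^ 2) * φ u) :=
        setIntegral_le_integral (hint.const_mul _)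
          (Eventually.of_forall fun u => mul_nonneg (Real.exp_pos _).le
            (mul_nonneg (Real.exp_pos _).le (hφ0 u)))

lemma lintegral_prod_mul_mul_le_of_symm {X : Type*} [MeasurableSpace X] {m : Measure X} [SFinite m]
    {k : X → X → ℝ≥0∞} (hk : Measurable (Function.uncurry k)) (hsymm : ∀ x y, k x y = k y x)
    {C : ℝ≥0∞} (hC : ∀ x, ∫⁻ y, k x y ∂m ≤ C) {φ : X → ℝ≥0∞} (hφ : AEMeasurable φ m) :
    ∫⁻ z, φ z.1 * φ z.2 * k z.1 z.2 ∂(m.prod m) ≤ C * ∫⁻ x, φ x ^ 2 ∂m := by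
  set A : X → ℝ≥0∞ := fun x => φ x ^ 2 / 2
  have hA : AEMeasurable A m := (hφ.pow_const 2).div_const 2
  have hk1 (x : X) : Measurable (k x) := hk.of_uncurry_left
  have hAk : AEMeasurable (fun z : X × X => A z.1 * k z.1 z.2) (m.prod m) :=
    hA.comp_fst.mul hk.aemeasurable
  have hyoung (z : X × X) : φ z.1 * φ z.2 * k z.1 z.2 ≤ A z.1 * k z.1 z.2 + A z.2 * k z.1 z.2 := by
    rw [← add_mul]
    gcongr
    simpa [A] using ENNReal.young_inequality (φ z.1) (φ z.2) Real.HolderConjugate.two_two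
  have hfst : ∫⁻ z, A z.1 * k z.1 z.2 ∂(m.prod m) ≤ C * ∫⁻ x, A x ∂m := by
    rw [lintegral_prod _ hAk, ← lintegral_const_mul'' _ hA]
    refine lintegral_mono fun x => ?_
    dsimp only
    rw [lintegral_const_mul _ (hk1 x), mul_comm]
    gcongr
    exact hC x
  have hswap : ∫⁻ z, A z.2 * k z.1 z.2 ∂(m.prod m) = ∫⁻ z, A z.1 * k z.1 z.2 ∂(m.prod m) := by
    rw [← lintegral_prod_swap]
    simp only [Prod.fst_swap, Prod.snd_swap, hsymm]
  calc ∫⁻ z, φ z.1 * φ z.2 * k z.1 z.2 ∂(m.prod m)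
      ≤ ∫⁻ z, A z.1 * k z.1 z.2 + A z.2 * k z.1 z.2 ∂(m.prod m) := lintegral_mono hyoung
    _ ≤ C * ∫⁻ x, A x ∂m + C * ∫⁻ x, A x ∂m := by
        rw [lintegral_add_left' hAk, hswap]
        gcongr
    _ = C * ∫⁻ x, φ x ^ 2 ∂m := by
        rw [← mul_add, ← lintegral_add_left' hA]
        simp only [A, ENNReal.add_halves]

/-- The oscillatory integral `u ↦ ∫ g(x) e^{-iuf(x)} dm(x)`; for a counting measure it is a
generalised Dirichlet polynomial with frequencies `f`. -/
noncomputable def oscIntegral {X : Type*} [MeasurableSpace X] (m : Measure X) (f : X → ℝ)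
    (g : X → ℂ) (u : ℝ) : ℂ :=
  ∫ x, g x * cexp (-(I * u * f x)) ∂m

section OscIntegral

variable {X : Type*} [MeasurableSpace X] {m : Measure X} {f : X → ℝ} {g : X → ℂ}

lemma norm_oscIntegral_le (u : ℝ) : ‖oscIntegral m f g u‖ ≤ ∫ x, ‖g x‖ ∂m := by
  refine (norm_integral_le_integral_norm _).trans_eq (integral_congr_ae (.of_forall fun x => ?_))
  simp only [norm_mul, norm_cexp_neg_I_mul_mul, mul_one]

lemma continuous_oscIntegral (hf : Measurable f) (hg : Integrable g m) :
    Continuous (oscIntegral m f g) := by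
  refine continuous_of_dominated (bound := fun x => ‖g x‖)
    (fun u => hg.aestronglyMeasurable.mul (by fun_prop)) (fun u => .of_forall fun x => ?_) hg.norm
    (.of_forall fun x => by fun_prop)
  rw [norm_mul, norm_cexp_neg_I_mul_mul, mul_one]

lemma integrable_gaussian_mul_norm_sq_oscIntegral (hf : Measurable f) (hg : Integrable g m)
    {T : ℝ} (hT : T ≠ 0) :
    Integrable fun u => Real.exp (-(u / T) ^ 2) * ‖oscIntegral m f g u‖ ^ 2 := by
  have hcont := continuous_oscIntegral hf hg
  refine (integrable_gaussian hT).mul_bdd (c := (∫ x, ‖g x‖ ∂m) ^ 2) (by fun_prop)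
    (.of_forall fun u => ?_)
  rw [norm_pow, norm_norm]
  exact pow_le_pow_left₀ (norm_nonneg _) (norm_oscIntegral_le u) 2

variable [SFinite m]

lemma norm_sq_oscIntegral_eq_integral_prod (u : ℝ) :
    ((‖oscIntegral m f g u‖ ^ 2 : ℝ) : ℂ) =
      ∫ z : X × X, g z.1 * (starRingEnd ℂ) (g z.2) * cexp (-(I * u * ((f z.1 - f z.2 : ℝ) : ℂ)))
        ∂(m.prod m) := by
  rw [ofReal_pow, ← mul_conj', oscIntegral, ← integral_conj, ← integral_prod_mul]
  congr 1; ext z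
  rw [map_mul, conj_cexp_neg_I_mul_mul, ofReal_sub,
    show -(I * u * (f z.1 - f z.2 : ℂ)) = -(I * u * f z.1) + I * u * f z.2 by ring, Complex.exp_add]
  ring

lemma integral_gaussian_mul_norm_sq_oscIntegral (hf : Measurable f) (hg : Integrable g m)
    {T : ℝ} (hT : 0 < T) :
    ((∫ u, Real.exp (-(u / T) ^ 2) * ‖oscIntegral m f g u‖ ^ 2 : ℝ) : ℂ) =
      ∫ z : X × X, g z.1 * (starRingEnd ℂ) (g z.2) *
        (T * √Real.pi * Real.exp (-(T * (f z.1 - f z.2)) ^ 2 / 4) : ℝ) ∂(m.prod m) := by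
  have hgg : Integrable (fun z : X × X => g z.1 * (starRingEnd ℂ) (g z.2)) (m.prod m) :=
    hg.mul_prod (conjCLE.toContinuousLinearMap.integrable_comp hg)
  have hphase : Measurable fun p : ℝ × (X × X) =>
      cexp (-(I * p.1 * ((f p.2.1 - f p.2.2 : ℝ) : ℂ))) := by fun_prop
  have hswap := ((integrable_gaussian hT.ne').ofReal.mul_prod hgg).mul_bdd (c := 1)
    hphase.aestronglyMeasurable (.of_forall fun p => (norm_cexp_neg_I_mul_mul _ _).le)
  rw [← integral_complex_ofReal]
  simp_rw [ofReal_mul, norm_sq_oscIntegral_eq_integral_prod, ← integral_const_mul]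
  rw [integral_integral_swap (hswap.congr (.of_forall fun p => mul_assoc _ _ _))]
  congr 1; ext z
  simp_rw [mul_left_comm _ (g z.1 * (starRingEnd ℂ) (g z.2))]
  rw [integral_const_mul, integral_gaussian_mul_cexp hT]
  push_cast; ring

lemma ofReal_integral_gaussian_mul_norm_sq_oscIntegral_le (hf : Measurable f) (hg : Integrable g m)
    {T : ℝ} (hT : 0 < T) {C : ℝ≥0∞}
    (hC : ∀ x, ∫⁻ y, ENNReal.ofReal (Real.exp (-(T * (f x - f y)) ^ 2 / 4)) ∂m ≤ C) :
    ENNReal.ofReal (∫ u, Real.exp (-(u / T) ^ 2) * ‖oscIntegral m f g u‖ ^ 2) ≤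
      ENNReal.ofReal (T * √Real.pi) * (C * ∫⁻ x, ‖g x‖ₑ ^ 2 ∂m) := by
  set k : X → X → ℝ≥0∞ := fun x y => ENNReal.ofReal (Real.exp (-(T * (f x - f y)) ^ 2 / 4))
  have hk : Measurable (Function.uncurry k) := by
    have hfst : Measurable fun z : X × X => f z.1 := hf.comp measurable_fst
    have hsnd : Measurable fun z : X × X => f z.2 := hf.comp measurable_snd
    simp only [Function.uncurry_def, k]
    fun_prop
  have hsymm (x y : X) : k x y = k y x := by
    simp only [k]; congr 3; ring
  have henorm (z : X × X) : ‖g z.1 * (starRingEnd ℂ) (g z.2) *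
      (T * √Real.pi * Real.exp (-(T * (f z.1 - f z.2)) ^ 2 / 4) : ℝ)‖ₑ =
      ENNReal.ofReal (T * √Real.pi) * (‖g z.1‖ₑ * ‖g z.2‖ₑ * k z.1 z.2) := by
    rw [enorm_mul, enorm_mul, RCLike.enorm_conj, ← ofReal_norm (E := ℂ) (ofReal _), norm_real,
      Real.norm_of_nonneg (by positivity), ENNReal.ofReal_mul (by positivity)]
    ring
  have hpos : 0 ≤ ∫ u, Real.exp (-(u / T) ^ 2) * ‖oscIntegral m f g u‖ ^ 2 :=
    integral_nonneg fun u => by positivity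
  rw [← Real.norm_of_nonneg hpos, ← norm_real,
    integral_gaussian_mul_norm_sq_oscIntegral hf hg hT, ofReal_norm]
  refine (enorm_integral_le_lintegral_enorm _).trans ?_
  simp_rw [henorm]
  rw [lintegral_const_mul' _ _ ENNReal.ofReal_ne_top]
  gcongr
  exact lintegral_prod_mul_mul_le_of_symm hk hsymm hC hg.aestronglyMeasurable.enorm

/-- The Gaussian majorant makes the kernel of the quadratic form `∫ |∫ g e^{-iuf}|²` positive, so
that Schur's test applies to it. -/
lemma integral_norm_sq_oscIntegral_le (hf : Measurable f) (hg : Integrable g m)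
    (hg2 : Integrable (fun x => ‖g x‖ ^ 2) m) {T : ℝ} (hT : 0 < T) {C : ℝ} (hC0 : 0 ≤ C)
    (hC : ∀ x, ∫⁻ y, ENNReal.ofReal (Real.exp (-(T * (f x - f y)) ^ 2 / 4)) ∂m ≤
      ENNReal.ofReal C) :
    ∫ u in (-T)..T, ‖oscIntegral m f g u‖ ^ 2 ≤
      Real.exp 1 * (T * √Real.pi * C * ∫ x, ‖g x‖ ^ 2 ∂m) := by
  have hcont := continuous_oscIntegral hf hg
  refine (intervalIntegral_le_integral_gaussian hT (φ := fun u => ‖oscIntegral m f g u‖ ^ 2)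
    (by fun_prop) (fun _ => by positivity)
    (integrable_gaussian_mul_norm_sq_oscIntegral hf hg hT.ne')).trans ?_
  gcongr
  have hg2_nonneg : 0 ≤ ∫ x, ‖g x‖ ^ 2 ∂m := integral_nonneg fun x => by positivity
  rw [← ENNReal.ofReal_le_ofReal_iff (by positivity), mul_assoc _ C,
    ENNReal.ofReal_mul (by positivity), ENNReal.ofReal_mul hC0,
    ofReal_integral_eq_lintegral_ofReal hg2 (.of_forall fun x => by positivity)]
  simpa only [ENNReal.ofReal_pow (norm_nonneg _), ofReal_norm] using
    ofReal_integral_gaussian_mul_norm_sq_oscIntegral_le hf hg hT hC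

end OscIntegral

/-! ### The truncated formula for `ζ` in the half-plane `0 < Re s` -/

/-- The fractional part function cut off to `(N, ∞)`; the remainder of the approximation of `ζ(s)`
by `∑_{n ≤ N} n^{-s}` is a Mellin transform of it. -/
noncomputable def fractTail (N : ℝ) : ℝ → ℂ := (Set.Ioi N).indicator fun x => (Int.fract x : ℝ)

lemma norm_fractTail_le (N x : ℝ) : ‖fractTail N x‖ ≤ 1 := by
  unfold fractTail
  refine (norm_indicator_le_norm_self _ x).trans ?_
  rw [norm_real, Real.norm_of_nonneg (Int.fract_nonneg x)]
  exact (Int.fract_lt_one x).le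

lemma measurable_fractTail (N : ℝ) : Measurable (fractTail N) :=
  (measurable_ofReal.comp measurable_fract).indicator measurableSet_Ioi

lemma fractTail_of_le {N x : ℝ} (hx : x ≤ N) : fractTail N x = 0 :=
  Set.indicator_of_notMem (Set.notMem_Ioi.2 hx) _

lemma locallyIntegrable_fractTail (N : ℝ) : LocallyIntegrable (fractTail N) :=
  (locallyIntegrable_const (1 : ℝ)).mono (measurable_fractTail N).aestronglyMeasurable
    (.of_forall fun x => by simpa using norm_fractTail_le N x)

lemma isBigO_fractTail_atTop (N : ℝ) : fractTail N =O[atTop] fun x : ℝ => x ^ (-(0 : ℝ)) :=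
  .of_bound 1 (.of_forall fun x => by simpa using norm_fractTail_le N x)

lemma isBigO_fractTail_nhdsGT_zero {N : ℝ} (hN : 0 < N) (b : ℝ) :
    fractTail N =O[nhdsWithin 0 (Set.Ioi 0)] fun x : ℝ => x ^ (-b) := by
  refine .of_bound 1 ?_
  filter_upwards [nhdsWithin_le_nhds (eventually_lt_nhds hN)] with x hx
  simp only [fractTail_of_le hx.le, norm_zero]
  positivity

section Mellin

variable {N : ℝ} {s : ℂ}

lemma mellinConvergent_fractTail (hN : 0 < N) (hs : 0 < s.re) :
    MellinConvergent (fractTail N) (-s) :=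
  mellinConvergent_of_isBigO_rpow (a := 0) (b := -s.re - 1)
    ((locallyIntegrable_fractTail N).locallyIntegrableOn _) (isBigO_fractTail_atTop N) (by simpa)
    (isBigO_fractTail_nhdsGT_zero hN _) (by simp)

lemma differentiableAt_mellin_fractTail (hN : 0 < N) (hs : 0 < s.re) :
    DifferentiableAt ℂ (fun s => mellin (fractTail N) (-s)) s := by
  refine DifferentiableAt.comp (g := mellin (fractTail N)) s ?_ differentiableAt_id.neg
  exact mellin_differentiableAt_of_isBigO_rpow (a := 0) (b := -s.re - 1)
    ((locallyIntegrable_fractTail N).locallyIntegrableOn _) (isBigO_fractTail_atTop N) (by simpa)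
    (isBigO_fractTail_nhdsGT_zero hN _) (by simp)

lemma cpow_smul_fractTail (N : ℝ) (s : ℂ) (t : ℝ) :
    (t : ℂ) ^ (-s - 1) • fractTail N t =
      (Set.Ioi N).indicator (fun t : ℝ => ((Int.fract t : ℝ) : ℂ) * (t : ℂ) ^ (-(s + 1))) t := by
  rw [neg_add']
  simp [fractTail, Set.indicator_apply, mul_comm]

lemma mellin_fractTail (hN : 0 < N) (s : ℂ) :
    mellin (fractTail N) (-s) =
      ∫ t in Set.Ioi N, ((Int.fract t : ℝ) : ℂ) * (t : ℂ) ^ (-(s + 1)) := by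
  simp_rw [mellin, cpow_smul_fractTail]
  rw [setIntegral_indicator measurableSet_Ioi,
    Set.inter_eq_right.2 (Set.Ioi_subset_Ioi hN.le)]

lemma integrableOn_fract_mul_cpow (hN : 0 < N) (hs : 0 < s.re) :
    IntegrableOn (fun t : ℝ => ((Int.fract t : ℝ) : ℂ) * (t : ℂ) ^ (-(s + 1))) (Set.Ioi N) := by
  refine ((mellinConvergent_fractTail hN hs).mono_set (Set.Ioi_subset_Ioi hN.le)).congr_fun
    (fun t ht => ?_) measurableSet_Ioi
  simp only [cpow_smul_fractTail, Set.indicator_of_mem ht]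

lemma ofReal_cpow_neg_eq_mul {t : ℝ} (ht : t ≠ 0) (s : ℂ) :
    (t : ℂ) ^ (-s) = t * (t : ℂ) ^ (-(s + 1)) := by
  rw [show -s = 1 + -(s + 1) by ring, cpow_add _ _ (ofReal_ne_zero.2 ht), cpow_one]

lemma riemannZeta_eq_of_one_lt_re (hs : 1 < s.re) :
    riemannZeta s = 1 + 1 / (s - 1) - s * mellin (fractTail 1) (-s) := by
  have hs1 : s - 1 ≠ 0 := sub_ne_zero.2 (by rintro rfl; simp at hs)
  have hfloor : riemannZeta s =
      s * ∫ t in Set.Ioi (1 : ℝ), (∑ _k ∈ Finset.Icc 1 ⌊t⌋₊, (1 : ℂ)) * (t : ℂ) ^ (-(s + 1)) := by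
    rw [← LSeries_one_eq_riemannZeta hs]
    refine LSeries_eq_mul_integral 1 zero_le_one hs (LSeriesSummable_one_iff.2 hs)
      (.of_bound 1 (.of_forall fun n => ?_))
    simp
  have hpole : ∫ t in Set.Ioi (1 : ℝ), (t : ℂ) ^ (-s) = 1 / (s - 1) := by
    rw [integral_Ioi_cpow_of_lt (by simpa using hs) one_pos, ofReal_one, one_cpow,
      show -s + 1 = -(s - 1) by ring, neg_div_neg_eq]
  have hint : IntegrableOn (fun t : ℝ => (t : ℂ) ^ (-s)) (Set.Ioi 1) :=
    integrableOn_Ioi_cpow_of_lt (by simpa using hs) one_pos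
  have hsplit : ∫ t in Set.Ioi (1 : ℝ),
      (∑ _k ∈ Finset.Icc 1 ⌊t⌋₊, (1 : ℂ)) * (t : ℂ) ^ (-(s + 1)) =
        1 / (s - 1) - mellin (fractTail 1) (-s) := by
    rw [mellin_fractTail one_pos, ← hpole,
      ← integral_sub hint (integrableOn_fract_mul_cpow one_pos (by linarith))]
    refine setIntegral_congr_fun measurableSet_Ioi fun t ht => ?_
    have ht0 : 0 < t := one_pos.trans ht
    have hfract : Int.fract t = t - (⌊t⌋₊ : ℝ) := by
      rw [Int.fract, natCast_floor_eq_intCast_floor ht0.le]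
    simp only [ofReal_cpow_neg_eq_mul ht0.ne' s, ← sub_mul, hfract]
    simp
  rw [hfloor, hsplit]
  field_simp
  ring

lemma isPreconnected_re_pos_diff_one : IsPreconnected ({s : ℂ | 0 < s.re} \ {1}) := by
  have himage : (fun z : ℂ => (Real.exp z.re : ℂ) + z.im * I) '' {0}ᶜ =
      {s : ℂ | 0 < s.re} \ {1} := by
    ext s
    constructor
    · rintro ⟨z, hz, rfl⟩
      refine ⟨by simpa [-ofReal_exp] using Real.exp_pos z.re, fun h => hz ?_⟩
      rw [Set.mem_singleton_iff, Complex.ext_iff] at h ⊢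
      simpa [-ofReal_exp] using h
    · rintro ⟨hs, hs1⟩
      refine ⟨Real.log s.re + s.im * I, fun h => hs1 ?_, by simp [Real.exp_log hs]⟩
      have hlog : Real.log s.re = 0 ∧ s.im = 0 := by
        simpa [Complex.ext_iff, -Real.log_eq_zero] using h
      exact Complex.ext (Real.eq_one_of_pos_of_log_eq_zero hs hlog.1) hlog.2
  rw [← himage]
  exact ((isConnected_compl_singleton_of_one_lt_rank (by simp) (0 : ℂ)).isPreconnected).image _
    (by fun_prop)

lemma riemannZeta_eq_of_re_pos (hs : 0 < s.re) (hs1 : s ≠ 1) :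
    riemannZeta s = 1 + 1 / (s - 1) - s * mellin (fractTail 1) (-s) := by
  have hopen : IsOpen ({s : ℂ | 0 < s.re} \ {1}) :=
    (isOpen_lt continuous_const continuous_re).sdiff isClosed_singleton
  have hzeta : DifferentiableOn ℂ riemannZeta ({s | 0 < s.re} \ {1}) := fun z hz =>
    (differentiableAt_riemannZeta hz.2).differentiableWithinAt
  have hformula : DifferentiableOn ℂ (fun s => 1 + 1 / (s - 1) - s * mellin (fractTail 1) (-s))
      ({s | 0 < s.re} \ {1}) := by
    intro z hz
    have hz1 : z - 1 ≠ 0 := sub_ne_zero.2 hz.2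
    refine DifferentiableAt.differentiableWithinAt (DifferentiableAt.sub ?_
      (differentiableAt_id.mul (differentiableAt_mellin_fractTail one_pos hz.1)))
    fun_prop (disch := assumption)
  refine (hzeta.analyticOnNhd hopen).eqOn_of_preconnected_of_eventuallyEq
    (hformula.analyticOnNhd hopen) isPreconnected_re_pos_diff_one (z₀ := 2) (by simp) ?_ ⟨hs, hs1⟩
  filter_upwards [(isOpen_lt continuous_const continuous_re).mem_nhds
    (show (2 : ℂ) ∈ {s : ℂ | 1 < s.re} by simp)] with z hz
  exact riemannZeta_eq_of_one_lt_re hz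

end Mellin

section Truncation

variable {s : ℂ} {N : ℕ}

lemma mellin_fractTail_eq_add_succ (hs : 0 < s.re) (hN : 1 ≤ N) :
    mellin (fractTail N) (-s) =
      (∫ t in (N : ℝ)..(N + 1 : ℕ), ((t - N : ℝ) : ℂ) * (t : ℂ) ^ (-(s + 1))) +
        mellin (fractTail (N + 1 : ℕ)) (-s) := by
  have hN0 : (0 : ℝ) < N := by exact_mod_cast hN
  have hle : (N : ℝ) ≤ (N + 1 : ℕ) := by push_cast; linarith
  rw [mellin_fractTail hN0, mellin_fractTail (by positivity), ← Set.Ioc_union_Ioi_eq_Ioi hle,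
    setIntegral_union (Set.Ioc_disjoint_Ioi le_rfl) measurableSet_Ioi
      ((integrableOn_fract_mul_cpow hN0 hs).mono_set Set.Ioc_subset_Ioi_self)
      (integrableOn_fract_mul_cpow (by positivity) hs),
    intervalIntegral.integral_of_le hle]
  congr 1
  rw [integral_Ioc_eq_integral_Ioo, integral_Ioc_eq_integral_Ioo]
  refine setIntegral_congr_fun measurableSet_Ioo fun t ht => ?_
  have hfract : Int.fract t = t - N := by
    have htN := ht.2
    push_cast at htN
    exact Int.fract_eq_iff.2 ⟨by linarith [ht.1], by linarith, N, by simp⟩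
  simp only [hfract]

lemma integral_sub_mul_cpow (hs0 : s ≠ 0) (hs1 : s ≠ 1) (hN : 1 ≤ N) :
    ∫ t in (N : ℝ)..(N + 1 : ℕ), ((t - N : ℝ) : ℂ) * (t : ℂ) ^ (-(s + 1)) =
      (((N + 1 : ℕ) : ℂ) ^ (1 - s) - (N : ℂ) ^ (1 - s)) / (1 - s) -
        N * ((((N + 1 : ℕ) : ℂ) ^ (-s) - (N : ℂ) ^ (-s)) / (-s)) := by
  have hzero : (0 : ℝ) ∉ Set.uIcc (N : ℝ) (N + 1 : ℕ) := by
    rw [Set.uIcc_of_le (by push_cast; linarith), Set.mem_Icc, not_and_or, not_le]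
    exact Or.inl (by exact_mod_cast hN)
  have hsplit : ∀ t ∈ Set.uIcc (N : ℝ) (N + 1 : ℕ), ((t - N : ℝ) : ℂ) * (t : ℂ) ^ (-(s + 1)) =
      (t : ℂ) ^ (-s) - N * (t : ℂ) ^ (-(s + 1)) := by
    intro t ht
    rw [ofReal_cpow_neg_eq_mul (by rintro rfl; exact hzero ht) s]
    push_cast; ring
  rw [intervalIntegral.integral_congr hsplit,
    intervalIntegral.integral_sub (intervalIntegral.intervalIntegrable_cpow (Or.inr hzero))
      ((intervalIntegral.intervalIntegrable_cpow (Or.inr hzero)).const_mul _),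
    intervalIntegral.integral_const_mul,
    integral_cpow (Or.inr ⟨fun h => hs1 (by linear_combination -h), hzero⟩),
    integral_cpow (Or.inr ⟨fun h => hs0 (by linear_combination -h), hzero⟩)]
  simp only [ofReal_natCast]
  rw [show -s + 1 = 1 - s by ring, show -(s + 1) + 1 = -s by ring]

lemma riemannZeta_eq_sum_sub_mellin (hs : 0 < s.re) (hs1 : s ≠ 1) (hN : 1 ≤ N) :
    riemannZeta s = ∑ n ∈ Finset.Icc 1 N, (n : ℂ) ^ (-s) + (N : ℂ) ^ (1 - s) / (s - 1) -
      s * mellin (fractTail N) (-s) := by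
  have hs0 : s ≠ 0 := by rintro rfl; simp at hs
  induction N, hN using Nat.le_induction with
  | base => rw [riemannZeta_eq_of_re_pos hs hs1]; simp
  | succ N hN ih =>
    have hN0 : (N : ℂ) ≠ 0 := by exact_mod_cast Nat.one_le_iff_ne_zero.1 hN
    have hN1 : ((N + 1 : ℕ) : ℂ) ≠ 0 := by exact_mod_cast N.succ_ne_zero
    have hpow0 : (N : ℂ) ^ s ≠ 0 := cpow_ne_zero_iff.2 (Or.inl hN0)
    have hpow1 : ((N + 1 : ℕ) : ℂ) ^ s ≠ 0 := cpow_ne_zero_iff.2 (Or.inl hN1)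
    have h1s : 1 - s ≠ 0 := sub_ne_zero.2 hs1.symm
    rw [ih, Finset.sum_Icc_succ_top (by omega), mellin_fractTail_eq_add_succ hs hN,
      integral_sub_mul_cpow hs0 hs1 hN, cpow_sub _ _ hN0, cpow_sub _ _ hN1, cpow_neg, cpow_neg,
      cpow_one, cpow_one, ← neg_sub 1 s]
    generalize ((N + 1 : ℕ) : ℂ) ^ s = y at *
    push_cast
    field_simp
    ring

end Truncation

/-! ### Mean squares on vertical lines -/

section MellinMeanSquare

lemma norm_exp_mul_fractTail_le {N : ℕ} (hN : 0 < N) (σ v : ℝ) :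
    ‖(Real.exp (σ * v) : ℂ) * fractTail N (Real.exp (-v))‖ ≤
      (Set.Iic (-Real.log N)).indicator (fun v => Real.exp (σ * v)) v := by
  have hN0 : (0 : ℝ) < N := by exact_mod_cast hN
  by_cases hv : v ≤ -Real.log N
  · rw [Set.indicator_of_mem (Set.mem_Iic.2 hv), norm_mul, norm_real,
      Real.norm_of_nonneg (Real.exp_pos _).le]
    exact mul_le_of_le_one_right (Real.exp_pos _).le (norm_fractTail_le _ _)
  · have hle : Real.exp (-v) ≤ N := by
      rw [← Real.exp_log hN0]; exact Real.exp_le_exp.2 (by linarith)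
    rw [Set.indicator_of_notMem (by simpa using hv), fractTail_of_le hle, mul_zero, norm_zero]

lemma integrable_indicator_exp_mul {σ : ℝ} (hσ : 0 < σ) (c : ℝ) :
    Integrable ((Set.Iic c).indicator fun v => Real.exp (σ * v)) :=
  (integrable_indicator_iff measurableSet_Iic).2 (integrableOn_exp_mul_Iic hσ c)

lemma norm_exp_mul_fractTail_sq_le {N : ℕ} (hN : 0 < N) (σ v : ℝ) :
    ‖(Real.exp (σ * v) : ℂ) * fractTail N (Real.exp (-v))‖ ^ 2 ≤
      (Set.Iic (-Real.log N)).indicator (fun v => Real.exp (2 * σ * v)) v := by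
  refine (pow_le_pow_left₀ (norm_nonneg _) (norm_exp_mul_fractTail_le hN σ v) 2).trans_eq ?_
  unfold Set.indicator
  split_ifs
  · rw [← Real.exp_nat_mul]; congr 1; push_cast; ring
  · exact zero_pow two_ne_zero

lemma integral_norm_exp_mul_fractTail_sq_le {N : ℕ} (hN : 0 < N) {σ : ℝ} (hσ : 1 / 2 ≤ σ) :
    ∫ v, ‖(Real.exp (σ * v) : ℂ) * fractTail N (Real.exp (-v))‖ ^ 2 ≤ (N : ℝ) ^ (-2 * σ) := by
  have hN0 : (0 : ℝ) < N := by exact_mod_cast hN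
  calc ∫ v, ‖(Real.exp (σ * v) : ℂ) * fractTail N (Real.exp (-v))‖ ^ 2
      ≤ ∫ v, (Set.Iic (-Real.log N)).indicator (fun v => Real.exp (2 * σ * v)) v :=
        integral_mono_of_nonneg (.of_forall fun v => by positivity)
          (integrable_indicator_exp_mul (by linarith) _)
          (.of_forall (norm_exp_mul_fractTail_sq_le hN σ))
    _ = (N : ℝ) ^ (-2 * σ) / (2 * σ) := by
        rw [integral_indicator measurableSet_Iic, integral_exp_mul_Iic (by linarith),
          Real.rpow_def_of_pos hN0]
        congr 2; ring
    _ ≤ (N : ℝ) ^ (-2 * σ) := div_le_self (by positivity) (by linarith)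

lemma lintegral_gaussian_sub {T : ℝ} (hT : 0 < T) (x : ℝ) :
    ∫⁻ y : ℝ, ENNReal.ofReal (Real.exp (-(T * (-x - -y)) ^ 2 / 4)) =
      ENNReal.ofReal (2 * √Real.pi / T) := by
  have hshift (y : ℝ) : Real.exp (-(T * (-x - -y)) ^ 2 / 4) =
      Real.exp (-(T ^ 2 / 4) * (y - x) ^ 2) := by
    congr 1; ring
  simp_rw [hshift]
  rw [← ofReal_integral_eq_lintegral_ofReal
      ((integrable_exp_neg_mul_sq (by positivity)).comp_sub_right x)
      (.of_forall fun y => (Real.exp_pos _).le),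
    integral_sub_right_eq_self (fun z => Real.exp (-(T ^ 2 / 4) * z ^ 2)), integral_gaussian,
    show Real.pi / (T ^ 2 / 4) = Real.pi * (2 / T) ^ 2 by field_simp; ring,
    Real.sqrt_mul Real.pi_pos.le, Real.sqrt_sq (by positivity)]
  congr 1; ring

lemma mellin_fractTail_eq_oscIntegral (N : ℕ) (σ u : ℝ) :
    mellin (fractTail N) (-(σ + u * I)) = oscIntegral volume (fun v => -v)
      (fun v => (Real.exp (σ * v) : ℂ) * fractTail N (Real.exp (-v))) u := by
  rw [mellin_eq_fourier, Real.fourier_eq', oscIntegral]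
  congr 1; ext v
  have hre : (-(σ + u * I) : ℂ).re = -σ := by simp
  have him : (-(σ + u * I) : ℂ).im = -u := by simp
  rw [hre, him, smul_eq_mul, real_smul, RCLike.inner_apply, conj_trivial, mul_comm]
  congr 2
  · rw [neg_neg]
  · push_cast; field_simp

lemma integral_norm_sq_mellin_fractTail_le {N : ℕ} (hN : 0 < N) {σ : ℝ} (hσ : 1 / 2 ≤ σ) {T : ℝ}
    (hT : 0 < T) :
    ∫ u in (-T)..T, ‖mellin (fractTail N) (-(σ + u * I))‖ ^ 2 ≤
      Real.exp 1 * (2 * Real.pi) * (N : ℝ) ^ (-2 * σ) := by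
  set g : ℝ → ℂ := fun v => (Real.exp (σ * v) : ℂ) * fractTail N (Real.exp (-v))
  have hmeas : Measurable g := by
    have := measurable_fractTail N
    fun_prop
  have hint : Integrable g :=
    (integrable_indicator_exp_mul (by linarith) _).mono' hmeas.aestronglyMeasurable
      (.of_forall (norm_exp_mul_fractTail_le hN σ))
  have hint2 : Integrable fun v => ‖g v‖ ^ 2 := by
    refine (integrable_indicator_exp_mul (by linarith : 0 < 2 * σ) (-Real.log N)).mono'
      (by fun_prop) (.of_forall fun v => ?_)
    rw [Real.norm_of_nonneg (by positivity)]
    exact norm_exp_mul_fractTail_sq_le hN σ v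
  simp_rw [mellin_fractTail_eq_oscIntegral]
  refine (integral_norm_sq_oscIntegral_le (by fun_prop) hint hint2 hT (by positivity)
    fun x => (lintegral_gaussian_sub hT x).le).trans ?_
  rw [mul_assoc (Real.exp 1), show T * √Real.pi * (2 * √Real.pi / T) = 2 * (√Real.pi * √Real.pi) by
    field_simp, Real.mul_self_sqrt Real.pi_pos.le]
  gcongr
  exact integral_norm_exp_mul_fractTail_sq_le hN hσ

end MellinMeanSquare

section DirichletPolynomial

lemma natCast_cpow_neg_add_mul_I {n : ℕ} (hn : n ≠ 0) (s : ℂ) (u : ℝ) :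
    (n : ℂ) ^ (-(s + u * I)) = (n : ℂ) ^ (-s) * cexp (-(I * u * (Real.log n : ℝ))) := by
  have hn0 : (n : ℂ) ≠ 0 := by exact_mod_cast hn
  rw [neg_add, cpow_add _ _ hn0, cpow_def_of_ne_zero hn0 (-(u * I)), natCast_log]
  congr 2; ring

lemma norm_sq_natCast_cpow_neg {n : ℕ} (hn : n ≠ 0) (s : ℂ) :
    ‖(n : ℂ) ^ (-s)‖ ^ 2 = (n : ℝ) ^ (-2 * s.re) := by
  rw [norm_natCast_cpow_of_pos hn.bot_lt, ← Real.rpow_mul_natCast (by positivity), neg_re]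
  congr 1; push_cast; ring

lemma inv_le_log_sub_log {p q N : ℕ} (hp : p ≠ 0) (hpq : p < q) (hq : q ≤ N) :
    (N : ℝ)⁻¹ ≤ Real.log q - Real.log p := by
  have hp0 : (0 : ℝ) < p := by exact_mod_cast Nat.pos_of_ne_zero hp
  have hq0 : (0 : ℝ) < q := by exact_mod_cast (Nat.zero_le p).trans_lt hpq
  have hlog := Real.log_le_sub_one_of_pos (div_pos hp0 hq0)
  rw [Real.log_div hp0.ne' hq0.ne'] at hlog
  have hratio : (p : ℝ) / q ≤ 1 - (q : ℝ)⁻¹ := by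
    rw [le_sub_iff_add_le, ← one_div, ← add_div, div_le_one hq0]
    exact_mod_cast hpq
  have hinv : (N : ℝ)⁻¹ ≤ (q : ℝ)⁻¹ := inv_anti₀ hq0 (by exact_mod_cast hq)
  linarith

lemma inv_le_abs_log_sub_log {p q N : ℕ} (hp : p ≠ 0) (hq : q ≠ 0) (hpq : p ≠ q) (hpN : p ≤ N)
    (hqN : q ≤ N) : (N : ℝ)⁻¹ ≤ |Real.log p - Real.log q| := by
  rcases hpq.lt_or_gt with h | h
  · rw [abs_sub_comm]
    exact (inv_le_log_sub_log hp h hqN).trans (le_abs_self _)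
  · exact (inv_le_log_sub_log hq h hpN).trans (le_abs_self _)

lemma sum_gaussian_log_sub_log_le {A : Finset ℕ} {N : ℕ} (hA0 : 0 ∉ A) (hAN : ∀ n ∈ A, n ≤ N)
    (T : ℝ) {m : ℕ} (hm : m ∈ A) :
    ∑ n ∈ A, Real.exp (-(T * (Real.log m - Real.log n)) ^ 2 / 4) ≤
      1 + N * Real.exp (-(T / N) ^ 2 / 4) := by
  have hne : ∀ n ∈ A, n ≠ 0 := fun n hn h => hA0 (h ▸ hn)
  rw [← Finset.add_sum_erase _ _ hm, sub_self, mul_zero, zero_pow two_ne_zero, neg_zero, zero_div,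
    Real.exp_zero]
  have hterm : ∀ n ∈ A.erase m, Real.exp (-(T * (Real.log m - Real.log n)) ^ 2 / 4) ≤
      Real.exp (-(T / N) ^ 2 / 4) := by
    intro n hn
    obtain ⟨hnm, hnA⟩ := Finset.mem_erase.1 hn
    have hsep := inv_le_abs_log_sub_log (hne m hm) (hne n hnA) hnm.symm (hAN m hm) (hAN n hnA)
    have hsq : (T / N) ^ 2 ≤ (T * (Real.log m - Real.log n)) ^ 2 := by
      rw [div_eq_mul_inv, mul_pow, mul_pow, ← sq_abs (_ - _)]
      gcongr
    gcongr
  have hcard : (A.erase m).card ≤ N := by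
    calc (A.erase m).card ≤ (Finset.Icc 1 N).card := Finset.card_le_card fun n hn => by
          have hnA := Finset.mem_of_mem_erase hn
          exact Finset.mem_Icc.2 ⟨Nat.one_le_iff_ne_zero.2 (hne n hnA), hAN n hnA⟩
      _ = N := by simp
  gcongr
  refine (Finset.sum_le_card_nsmul _ _ _ hterm).trans ?_
  rw [nsmul_eq_mul]
  gcongr

lemma integral_norm_sq_sum_cpow_le {A : Finset ℕ} {N : ℕ} (hA0 : 0 ∉ A) (hAN : ∀ n ∈ A, n ≤ N)
    (σ : ℝ) {T : ℝ} (hT : 0 < T) :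
    ∫ u in (-T)..T, ‖∑ n ∈ A, (n : ℂ) ^ (-(σ + u * I))‖ ^ 2 ≤
      Real.exp 1 * (T * √Real.pi * (1 + N * Real.exp (-(T / N) ^ 2 / 4)) *
        ∑ n ∈ A, (n : ℝ) ^ (-2 * σ)) := by
  let _ : MeasurableSpace A := ⊤
  have : MeasurableSingletonClass A := ⟨fun _ => trivial⟩
  have hpoly (u : ℝ) : ∑ n ∈ A, (n : ℂ) ^ (-(σ + u * I)) =
      oscIntegral (Measure.count : Measure A) (fun n => Real.log (n : ℕ))
        (fun n => ((n : ℕ) : ℂ) ^ (-(σ : ℂ))) u := by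
    rw [oscIntegral, integral_count, ← Finset.sum_coe_sort A fun n => (n : ℂ) ^ (-(σ + u * I))]
    exact Finset.sum_congr rfl fun n _ =>
      natCast_cpow_neg_add_mul_I (ne_of_mem_of_not_mem n.2 hA0) σ u
  have hnorm : ∫ n : A, ‖((n : ℕ) : ℂ) ^ (-(σ : ℂ))‖ ^ 2 ∂Measure.count =
      ∑ n ∈ A, (n : ℝ) ^ (-2 * σ) := by
    rw [integral_count, ← Finset.sum_coe_sort A fun n => (n : ℝ) ^ (-2 * σ)]
    exact Finset.sum_congr rfl fun n _ => by
      rw [norm_sq_natCast_cpow_neg (ne_of_mem_of_not_mem n.2 hA0), ofReal_re]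
  simp_rw [hpoly]
  rw [← hnorm]
  refine integral_norm_sq_oscIntegral_le measurable_from_top .of_finite .of_finite hT
    (by positivity) fun m => ?_
  rw [lintegral_count, tsum_fintype, ← ENNReal.ofReal_sum_of_nonneg fun _ _ => (Real.exp_pos _).le,
    Finset.sum_coe_sort A fun n => Real.exp (-(T * (Real.log (m : ℕ) - Real.log n)) ^ 2 / 4)]
  exact ENNReal.ofReal_le_ofReal (sum_gaussian_log_sub_log_le hA0 hAN T m.2)

end DirichletPolynomial

section ZetaMeanSquareBound

variable {σ σ₁ σ₂ T : ℝ} {M N : ℕ}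

lemma add_mul_I_ne_one (hσ : σ ≠ 1) (u : ℝ) : (σ + u * I : ℂ) ≠ 1 := by
  intro h
  exact hσ (by simpa using congrArg re h)

lemma continuous_natCast_cpow_vertical (hN : N ≠ 0) (σ : ℝ) :
    Continuous fun u : ℝ => (N : ℂ) ^ (-(σ + u * I)) :=
  Continuous.const_cpow (by fun_prop) (Or.inl (by exact_mod_cast hN))

lemma continuous_natCast_cpow_div_vertical (hN : N ≠ 0) (hσ : σ ≠ 1) :
    Continuous fun u : ℝ => (N : ℂ) ^ (1 - (σ + u * I)) / ((σ + u * I) - 1) :=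
  (Continuous.const_cpow (by fun_prop) (Or.inl (by exact_mod_cast hN))).div (by fun_prop)
    fun u => sub_ne_zero.2 (add_mul_I_ne_one hσ u)

lemma continuous_mellin_fractTail_vertical (hN : 0 < N) (hσ : 0 < σ) :
    Continuous fun u : ℝ => mellin (fractTail N) (-(σ + u * I)) := by
  refine continuous_iff_continuousAt.2 fun u => ?_
  have hdiff := differentiableAt_mellin_fractTail (N := N) (s := σ + u * I)
    (by exact_mod_cast hN) (by simpa using hσ)
  exact ContinuousAt.comp (f := fun u : ℝ => (σ + u * I : ℂ)) hdiff.continuousAt (by fun_prop)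

lemma norm_sq_natCast_cpow_div_le (hN : 0 < N) (hσ2 : σ ≤ σ₂) (hσ0 : 0 ≤ σ) (h2 : σ₂ < 1) (u : ℝ) :
    ‖(N : ℂ) ^ (1 - (σ + u * I)) / ((σ + u * I) - 1)‖ ^ 2 ≤
      (N : ℝ) ^ (2 - 2 * σ) * ((1 - σ₂) ^ 2)⁻¹ * (1 + u ^ 2)⁻¹ := by
  have hnum : ‖(N : ℂ) ^ (1 - (σ + u * I))‖ ^ 2 = (N : ℝ) ^ (2 - 2 * σ) := by
    rw [norm_natCast_cpow_of_pos hN, ← Real.rpow_mul_natCast (by positivity)]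
    congr 1; simp; ring
  have hden : ‖(σ + u * I) - 1‖ ^ 2 = (1 - σ) ^ 2 + u ^ 2 := by
    rw [← normSq_eq_norm_sq, normSq_apply]; simp; ring
  rw [norm_div, div_pow, hnum, hden, mul_assoc, ← mul_inv, div_eq_mul_inv]
  have hpos : 0 < 1 - σ₂ := by linarith
  gcongr
  nlinarith [mul_nonneg (sq_nonneg u) (by nlinarith : 0 ≤ 1 - (1 - σ₂) ^ 2)]

lemma integral_norm_sq_natCast_cpow_div_le (hN : 0 < N) (hσ2 : σ ≤ σ₂) (hσ0 : 0 ≤ σ) (h2 : σ₂ < 1)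
    (hT : 0 ≤ T) :
    ∫ u in (-T)..T, ‖(N : ℂ) ^ (1 - (σ + u * I)) / ((σ + u * I) - 1)‖ ^ 2 ≤
      (N : ℝ) ^ (2 - 2 * σ) * ((1 - σ₂) ^ 2)⁻¹ * Real.pi := by
  calc _ ≤ ∫ u in (-T)..T, (N : ℝ) ^ (2 - 2 * σ) * ((1 - σ₂) ^ 2)⁻¹ * (1 + u ^ 2)⁻¹ := by
        refine intervalIntegral.integral_mono_on (by linarith) ?_ ?_
          fun u _ => norm_sq_natCast_cpow_div_le hN hσ2 hσ0 h2 u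
        · exact ((continuous_natCast_cpow_div_vertical hN.ne' (by linarith)).norm.pow
            2).intervalIntegrable _ _
        · refine (continuous_const.mul (Continuous.inv₀ (by fun_prop) ?_)).intervalIntegrable _ _
          intro u; positivity
    _ ≤ _ := by
      rw [intervalIntegral.integral_const_mul, integral_inv_one_add_sq, Real.arctan_neg]
      have := Real.arctan_lt_pi_div_two T
      gcongr
      linarith

lemma integral_norm_sub_sq_le {E : Type*} [NormedAddCommGroup E] {a b : ℝ} (hab : a ≤ b)
    {f g : ℝ → E} (hf : Continuous f) (hg : Continuous g) :
    ∫ u in a..b, ‖f u - g u‖ ^ 2 ≤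
      2 * (∫ u in a..b, ‖f u‖ ^ 2) + 2 * ∫ u in a..b, ‖g u‖ ^ 2 := by
  have hint {h : ℝ → E} (hh : Continuous h) : IntervalIntegrable (‖h ·‖ ^ 2) volume a b :=
    (hh.norm.pow 2).intervalIntegrable _ _
  rw [← intervalIntegral.integral_const_mul, ← intervalIntegral.integral_const_mul,
    ← intervalIntegral.integral_add ((hint hf).const_mul 2) ((hint hg).const_mul 2)]
  refine intervalIntegral.integral_mono_on hab (hint (hf.sub hg))
    (((hint hf).const_mul 2).add ((hint hg).const_mul 2)) fun u _ => ?_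
  have hsub := pow_le_pow_left₀ (norm_nonneg _) (norm_sub_le (f u) (g u)) 2
  nlinarith [sq_nonneg (‖f u‖ - ‖g u‖)]

lemma integral_norm_mul_sq_le {a b C : ℝ} (hab : a ≤ b) {f g : ℝ → ℂ} (hf : Continuous f)
    (hg : Continuous g) (hC : ∀ u ∈ Set.Icc a b, ‖f u‖ ^ 2 ≤ C) :
    ∫ u in a..b, ‖f u * g u‖ ^ 2 ≤ C * ∫ u in a..b, ‖g u‖ ^ 2 := by
  rw [← intervalIntegral.integral_const_mul]
  refine intervalIntegral.integral_mono_on hab (((hf.mul hg).norm.pow 2).intervalIntegrable _ _)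
    (((hg.norm.pow 2).const_mul C).intervalIntegrable _ _) fun u hu => ?_
  rw [norm_mul, mul_pow]
  gcongr
  exact hC u hu

lemma integral_norm_sq_mul_mellin_fractTail_le (hN : 0 < N) (hσ : 1 / 2 ≤ σ) (hσ1 : σ ≤ 1)
    (hT : 0 < T) :
    ∫ u in (-T)..T, ‖(σ + u * I) * mellin (fractTail N) (-(σ + u * I))‖ ^ 2 ≤
      (1 + T ^ 2) * (Real.exp 1 * (2 * Real.pi) * (N : ℝ) ^ (-2 * σ)) := by
  refine (integral_norm_mul_sq_le (C := 1 + T ^ 2) (by linarith) (by fun_prop)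
    (continuous_mellin_fractTail_vertical hN (by linarith)) fun u hu => ?_).trans ?_
  · rw [← normSq_eq_norm_sq, normSq_add_mul_I]
    nlinarith [hu.1, hu.2]
  · gcongr
    exact integral_norm_sq_mellin_fractTail_le hN hσ hT

lemma riemannZeta_sub_sum_eq (hMN : M ≤ N) (hN : 0 < N) {s : ℂ} (hs : 0 < s.re) (hs1 : s ≠ 1) :
    riemannZeta s - ∑ n ∈ Finset.Icc 1 M, (n : ℂ) ^ (-s) =
      ∑ n ∈ Finset.Ioc M N, (n : ℂ) ^ (-s) -
        (s * mellin (fractTail N) (-s) - (N : ℂ) ^ (1 - s) / (s - 1)) := by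
  have hsplit : ∑ n ∈ Finset.Icc 1 N, (n : ℂ) ^ (-s) =
      ∑ n ∈ Finset.Icc 1 M, (n : ℂ) ^ (-s) + ∑ n ∈ Finset.Ioc M N, (n : ℂ) ^ (-s) :=
    (Finset.sum_Ioc_consecutive _ M.zero_le hMN).symm
  rw [riemannZeta_eq_sum_sub_mellin hs hs1 hN, hsplit]
  ring

lemma integral_norm_sq_riemannZeta_sub_sum_le (hMN : M ≤ N) (hN : 0 < N) (h1 : 1 / 2 ≤ σ₁)
    (hσ : σ ∈ Set.Icc σ₁ σ₂) (h2 : σ₂ < 1) (hT : 0 < T) :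
    ∫ u in (-T)..T, ‖riemannZeta (σ + u * I) -
        ∑ n ∈ Finset.Icc 1 M, (n : ℂ) ^ (-(σ + u * I))‖ ^ 2 ≤
      2 * (Real.exp 1 * (T * √Real.pi * (1 + N * Real.exp (-(T / N) ^ 2 / 4)) *
        ∑ n ∈ Finset.Ioc M N, (n : ℝ) ^ (-2 * σ₁))) +
      2 * (2 * ((1 + T ^ 2) * (Real.exp 1 * (2 * Real.pi) * (N : ℝ) ^ (-2 * σ₁))) +
        2 * ((N : ℝ) ^ (2 - 2 * σ₁) * ((1 - σ₂) ^ 2)⁻¹ * Real.pi)) := by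
  obtain ⟨hσ1, hσ2⟩ := hσ
  have hN1 : (1 : ℝ) ≤ N := by exact_mod_cast hN
  have hpos : ∀ n ∈ Finset.Ioc M N, 0 < n := fun n hn => by
    have := Finset.mem_Ioc.1 hn; omega
  have hne1 : σ ≠ 1 := by linarith
  have hmellin : Continuous fun u : ℝ => (σ + u * I) * mellin (fractTail N) (-(σ + u * I)) :=
    (by fun_prop : Continuous fun u : ℝ => (σ + u * I : ℂ)).mul
      (continuous_mellin_fractTail_vertical hN (by linarith))
  have hpole := continuous_natCast_cpow_div_vertical hN.ne' hne1
  have hsum : ∑ n ∈ Finset.Ioc M N, (n : ℝ) ^ (-2 * σ) ≤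
      ∑ n ∈ Finset.Ioc M N, (n : ℝ) ^ (-2 * σ₁) :=
    Finset.sum_le_sum fun n hn => Real.rpow_le_rpow_of_exponent_le
      (by exact_mod_cast hpos n hn) (by linarith)
  simp_rw [riemannZeta_sub_sum_eq hMN hN (s := σ + (_ : ℝ) * I) (by simp; linarith)
    (add_mul_I_ne_one hne1 _)]
  refine (integral_norm_sub_sq_le (by linarith) (continuous_finsetSum _ fun n hn =>
    continuous_natCast_cpow_vertical (hpos n hn).ne' σ) (hmellin.sub hpole)).trans ?_
  gcongr
  · refine (integral_norm_sq_sum_cpow_le (fun h => (hpos 0 h).ne rfl)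
      (fun n hn => (Finset.mem_Ioc.1 hn).2) σ hT).trans ?_
    gcongr
  · refine (integral_norm_sub_sq_le (by linarith) hmellin hpole).trans ?_
    gcongr
    · refine (integral_norm_sq_mul_mellin_fractTail_le hN (by linarith) (by linarith) hT).trans ?_
      gcongr _ * (_ * ?_)
      exact Real.rpow_le_rpow_of_exponent_le hN1 (by linarith)
    · refine (integral_norm_sq_natCast_cpow_div_le hN hσ2 (by linarith) h2 hT.le).trans ?_
      gcongr

end ZetaMeanSquareBound

section Growth

variable {θ σ η : ℝ}

lemma eventually_forall_mul_exp_le_one (hθ : θ < 1) {C : ℝ} (hC : 0 < C) :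
    ∀ᶠ T : ℝ in atTop, ∀ x, 0 < x → x ≤ C * T ^ θ → x * Real.exp (-(T / x) ^ 2 / 4) ≤ 1 := by
  have hd : 0 < 2 - 2 * θ := by linarith
  have hlim := ((tendsto_rpow_mul_exp_neg_mul_atTop_nhds_zero (θ / (2 - 2 * θ)) (1 / (4 * C ^ 2))
    (by positivity)).comp (tendsto_rpow_atTop hd)).const_mul C
  rw [mul_zero] at hlim
  filter_upwards [hlim.eventually_le_const one_pos, eventually_gt_atTop 0] with T hsmall hT x hx hxT
  simp only [Function.comp_apply] at hsmall
  rw [← Real.rpow_mul hT.le, mul_div_cancel₀ _ hd.ne'] at hsmall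
  have hexp : 1 / (4 * C ^ 2) * T ^ (2 - 2 * θ) ≤ (T / x) ^ 2 / 4 := by
    calc 1 / (4 * C ^ 2) * T ^ (2 - 2 * θ) = (T / (C * T ^ θ)) ^ 2 / 4 := by
          rw [Real.rpow_sub hT, Real.rpow_ofNat, mul_comm 2 θ, Real.rpow_mul hT.le, Real.rpow_ofNat]
          field_simp
      _ ≤ _ := by gcongr
  calc x * Real.exp (-(T / x) ^ 2 / 4)
      ≤ C * T ^ θ * Real.exp (-(1 / (4 * C ^ 2)) * T ^ (2 - 2 * θ)) := by
        gcongr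
        linarith
    _ ≤ 1 := by rwa [mul_assoc]

lemma eventually_const_mul_rpow_le {α : ℝ} (hα : α < 1) (C : ℝ) (hη : 0 < η) :
    ∀ᶠ T : ℝ in atTop, C * T ^ α ≤ η * T := by
  filter_upwards [(tendsto_rpow_atTop (sub_pos.2 hα)).eventually_ge_atTop (C / η),
    eventually_gt_atTop 0] with T hlarge hT
  rw [div_le_iff₀ hη, Real.rpow_sub hT, Real.rpow_one, div_mul_eq_mul_div,
    le_div_iff₀ (by positivity)] at hlarge
  linarith

lemma eventually_forall_rpow_mul_le (hσ1 : σ ≤ 1) (hθ : θ * (2 - 2 * σ) < 1) (C : ℝ) (hC : 0 ≤ C)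
    (hη : 0 < η) :
    ∀ᶠ T : ℝ in atTop, ∀ x, 0 < x → x ≤ 2 * T ^ θ → x ^ (2 - 2 * σ) * C ≤ η * T := by
  filter_upwards [eventually_const_mul_rpow_le hθ (2 ^ (2 - 2 * σ) * C) hη,
    eventually_gt_atTop 0] with T hsmall hT x hx hxT
  calc x ^ (2 - 2 * σ) * C ≤ (2 * T ^ θ) ^ (2 - 2 * σ) * C := by
        gcongr
        linarith
    _ = 2 ^ (2 - 2 * σ) * C * T ^ (θ * (2 - 2 * σ)) := by
        rw [Real.mul_rpow (by norm_num) (by positivity), ← Real.rpow_mul hT.le]; ring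
    _ ≤ _ := hsmall

lemma eventually_forall_sq_mul_rpow_le (hσ : 0 < σ) (hθ : 1 < 2 * σ * θ) (C : ℝ) (hC : 0 ≤ C)
    (hη : 0 < η) :
    ∀ᶠ T : ℝ in atTop, ∀ x, T ^ θ ≤ x → (1 + T ^ 2) * (C * x ^ (-2 * σ)) ≤ η * T := by
  filter_upwards [eventually_const_mul_rpow_le (by linarith : 2 - 2 * σ * θ < 1) (2 * C) hη,
    eventually_ge_atTop 1] with T hsmall hT x hxT
  have hT0 : 0 < T := by linarith
  calc (1 + T ^ 2) * (C * x ^ (-2 * σ)) ≤ (2 * T ^ 2) * (C * (T ^ θ) ^ (-2 * σ)) := by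
        have hsq : 1 + T ^ 2 ≤ 2 * T ^ 2 := by nlinarith
        have hx : x ^ (-2 * σ) ≤ (T ^ θ) ^ (-2 * σ) :=
          Real.rpow_le_rpow_of_nonpos (by positivity) hxT (by linarith)
        have := (Real.rpow_pos_of_pos hT0 θ).trans_le hxT
        gcongr
    _ = 2 * C * T ^ (2 - 2 * σ * θ) := by
        rw [← Real.rpow_mul hT0.le, sub_eq_add_neg 2, Real.rpow_add hT0, Real.rpow_ofNat,
          show θ * (-2 * σ) = -(2 * σ * θ) by ring]
        ring
    _ ≤ _ := hsmall

end Growth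

section MeanSquareLE

/-- The mean square of `F` over the segments of height `T` is at most `η`, uniformly on the
vertical lines `σ₁ ≤ re s ≤ σ₂` and for all large `T`. The integral over `[-T, T]` is compared with
`η * T`, which absorbs a factor `2`. -/
def MeanSquareLE (σ₁ σ₂ : ℝ) (F : ℂ → ℂ) (η : ℝ) : Prop :=
  ∀ᶠ T : ℝ in atTop, ∀ σ ∈ Set.Icc σ₁ σ₂, ∫ u in (-T)..T, ‖F (σ + u * I)‖ ^ 2 ≤ η * T

variable {σ₁ σ₂ η η' : ℝ} {F G : ℂ → ℂ}

lemma MeanSquareLE.congr (hF : MeanSquareLE σ₁ σ₂ F η)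
    (h : ∀ s, s.re ∈ Set.Icc σ₁ σ₂ → F s = G s) : MeanSquareLE σ₁ σ₂ G η := by
  filter_upwards [hF] with T hT σ hσ
  have hFG (u : ℝ) : F (σ + u * I) = G (σ + u * I) := h _ (by simpa using hσ)
  simpa only [hFG] using hT σ hσ

lemma MeanSquareLE.mono (hF : MeanSquareLE σ₁ σ₂ F η) (h : η ≤ η') : MeanSquareLE σ₁ σ₂ F η' := by
  filter_upwards [hF, eventually_ge_atTop 0] with T hT hT0 σ hσ
  exact (hT σ hσ).trans (by gcongr)

lemma continuous_vertical_of_continuousOn (hF : ContinuousOn F (re ⁻¹' Set.Icc σ₁ σ₂)) {σ : ℝ}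
    (hσ : σ ∈ Set.Icc σ₁ σ₂) : Continuous fun u : ℝ => F (σ + u * I) :=
  hF.comp_continuous (by fun_prop) fun u => by simpa using hσ

lemma MeanSquareLE.sub (hF : MeanSquareLE σ₁ σ₂ F η) (hG : MeanSquareLE σ₁ σ₂ G η')
    (hFc : ContinuousOn F (re ⁻¹' Set.Icc σ₁ σ₂)) (hGc : ContinuousOn G (re ⁻¹' Set.Icc σ₁ σ₂)) :
    MeanSquareLE σ₁ σ₂ (fun s => F s - G s) (2 * η + 2 * η') := by
  filter_upwards [hF, hG, eventually_ge_atTop 0] with T hFT hGT hT σ hσ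
  refine (integral_norm_sub_sq_le (by linarith) (continuous_vertical_of_continuousOn hFc hσ)
    (continuous_vertical_of_continuousOn hGc hσ)).trans ?_
  linarith [hFT σ hσ, hGT σ hσ]

lemma MeanSquareLE.mul_left (hG : MeanSquareLE σ₁ σ₂ G η)
    (hFc : ContinuousOn F (re ⁻¹' Set.Icc σ₁ σ₂)) (hGc : ContinuousOn G (re ⁻¹' Set.Icc σ₁ σ₂))
    {C : ℝ} (hC : ∀ s, s.re ∈ Set.Icc σ₁ σ₂ → ‖F s‖ ≤ C) :
    MeanSquareLE σ₁ σ₂ (fun s => F s * G s) (C ^ 2 * η) := by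
  filter_upwards [hG, eventually_ge_atTop 0] with T hGT hT σ hσ
  refine (integral_norm_mul_sq_le (C := C ^ 2) (by linarith)
    (continuous_vertical_of_continuousOn hFc hσ) (continuous_vertical_of_continuousOn hGc hσ)
    fun u _ => ?_).trans ?_
  · gcongr
    exact hC _ (by simpa using hσ)
  · rw [mul_assoc]
    gcongr
    exact hGT σ hσ

lemma meanSquareLE_sum_cpow (σ₁ σ₂ : ℝ) {A : Finset ℕ} (hA : 0 ∉ A) :
    MeanSquareLE σ₁ σ₂ (fun s => ∑ n ∈ A, (n : ℂ) ^ (-s))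
      (Real.exp 1 * (√Real.pi * (2 * ∑ n ∈ A, (n : ℝ) ^ (-2 * σ₁)))) := by
  set N : ℕ := A.sup id + 1
  have hAN : ∀ n ∈ A, n ≤ N := fun n hn => (Finset.le_sup (f := id) hn).trans (Nat.le_succ _)
  filter_upwards [eventually_forall_mul_exp_le_one zero_lt_one (C := N) (by positivity),
    eventually_gt_atTop 0] with T hexp hT σ hσ
  refine (integral_norm_sq_sum_cpow_le hA hAN σ hT).trans ?_
  have hsum : ∑ n ∈ A, (n : ℝ) ^ (-2 * σ) ≤ ∑ n ∈ A, (n : ℝ) ^ (-2 * σ₁) :=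
    Finset.sum_le_sum fun n hn => Real.rpow_le_rpow_of_exponent_le
      (by exact_mod_cast Nat.one_le_iff_ne_zero.2 fun h => hA (h ▸ hn)) (by linarith [hσ.1])
  calc Real.exp 1 * (T * √Real.pi * (1 + N * Real.exp (-(T / N) ^ 2 / 4)) *
        ∑ n ∈ A, (n : ℝ) ^ (-2 * σ))
      ≤ Real.exp 1 * (T * √Real.pi * (1 + 1) * ∑ n ∈ A, (n : ℝ) ^ (-2 * σ₁)) := by
        gcongr
        exact hexp N (by positivity) (by simp)
    _ = _ := by ring

end MeanSquareLE

section ZetaMeanSquare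

variable {σ₁ σ₂ η : ℝ}

lemma exists_forall_sum_rpow_le {σ : ℝ} (hσ : 1 / 2 < σ) (hη : 0 < η) :
    ∃ M₀ : ℕ, ∀ A : Finset ℕ, (∀ n ∈ A, M₀ < n) → ∑ n ∈ A, (n : ℝ) ^ (-2 * σ) ≤ η := by
  have hsum : Summable fun n : ℕ => (n : ℝ) ^ (-2 * σ) := Real.summable_nat_rpow.2 (by linarith)
  obtain ⟨s, hs⟩ := summable_iff_vanishing_norm.1 hsum η hη
  refine ⟨s.sup id, fun A hA => (le_abs_self _).trans (hs A ?_).le⟩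
  exact Finset.disjoint_left.2 fun n hnA hns =>
    (hA n hnA).not_ge (Finset.le_sup (f := id) hns)

lemma exists_meanSquareLE_riemannZeta_sub_sum (h1 : 1 / 2 < σ₁) (h2 : σ₂ < 1) (hη : 0 < η) :
    ∃ M₀ : ℕ, ∀ M ≥ M₀, MeanSquareLE σ₁ σ₂
      (fun s => riemannZeta s - ∑ n ∈ Finset.Icc 1 M, (n : ℂ) ^ (-s)) η := by
  rcases lt_or_ge σ₂ σ₁ with h12 | h12
  · exact ⟨0, fun M _ => .of_forall fun T σ hσ => absurd (hσ.1.trans hσ.2) h12.not_ge⟩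
  obtain ⟨M₀, hM₀⟩ := exists_forall_sum_rpow_le h1
    (by positivity : 0 < η / (12 * (Real.exp 1 * √Real.pi)))
  refine ⟨M₀, fun M hM => ?_⟩
  -- any cut-off `N = T ^ θ` with `1 / (2 * σ₁) < θ < 1` makes all three error terms small
  obtain ⟨θ, hθ1, hθ2⟩ : ∃ θ, 1 / (2 * σ₁) < θ ∧ θ < 1 :=
    exists_between (by rw [div_lt_one (by linarith)]; linarith)
  have hθ0 : 0 < θ := lt_trans (by positivity) hθ1
  rw [div_lt_iff₀' (by linarith)] at hθ1
  filter_upwards [eventually_forall_mul_exp_le_one hθ2 two_pos,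
    eventually_forall_rpow_mul_le (θ := θ) (by linarith : σ₁ ≤ 1) (by nlinarith)
      (((1 - σ₂) ^ 2)⁻¹ * Real.pi) (by positivity) (by positivity : 0 < η / 12),
    eventually_forall_sq_mul_rpow_le (by linarith) hθ1 (Real.exp 1 * (2 * Real.pi))
      (by positivity) (by positivity : 0 < η / 12),
    (tendsto_rpow_atTop hθ0).eventually_ge_atTop (M : ℝ), eventually_ge_atTop 1]
    with T hexp hpole hmellin hMT hT σ hσ
  have hT1 : 1 ≤ T ^ θ := Real.one_le_rpow hT hθ0.le
  have hlower : T ^ θ ≤ ⌈T ^ θ⌉₊ := Nat.le_ceil _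
  have hupper : (⌈T ^ θ⌉₊ : ℝ) ≤ 2 * T ^ θ := by
    linarith [Nat.ceil_lt_add_one (by linarith : 0 ≤ T ^ θ)]
  set N : ℕ := ⌈T ^ θ⌉₊
  have hN : (0 : ℝ) < N := by linarith
  have htail := hM₀ (Finset.Ioc M N) fun n hn => hM.trans_lt (Finset.mem_Ioc.1 hn).1
  have hpoly : Real.exp 1 * (T * √Real.pi * (1 + N * Real.exp (-(T / N) ^ 2 / 4)) *
      ∑ n ∈ Finset.Ioc M N, (n : ℝ) ^ (-2 * σ₁)) ≤ η / 6 * T := by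
    calc _ ≤ Real.exp 1 * (T * √Real.pi * (1 + 1) * (η / (12 * (Real.exp 1 * √Real.pi)))) := by
          gcongr
          exact hexp N hN hupper
      _ = _ := by field_simp; ring
  refine (integral_norm_sq_riemannZeta_sub_sum_le (by exact_mod_cast hMT.trans hlower)
    (by exact_mod_cast hN) h1.le hσ h2 (by linarith)).trans ?_
  rw [mul_assoc ((N : ℝ) ^ (2 - 2 * σ₁))]
  linarith [hpole N hN hupper, hmellin N hlower]

end ZetaMeanSquare

/-! ### Sieving the first primes out of ζ -/

/-- The sequence `2, 3, 5, …` of primes, indexed from `0`. -/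
noncomputable def nthPrime (k : ℕ) : ℕ := Nat.nth Nat.Prime k

lemma prime_nthPrime (k : ℕ) : (nthPrime k).Prime := Nat.prime_nth_prime k

lemma strictMono_nthPrime : StrictMono nthPrime := Nat.nth_strictMono Nat.infinite_setOfPred_prime

lemma exists_nthPrime_eq {p : ℕ} (hp : p.Prime) : ∃ k, nthPrime k = p :=
  ⟨Nat.count Nat.Prime p, Nat.nth_count hp⟩

lemma nthPrime_dvd_nthPrime_iff {j k : ℕ} : nthPrime j ∣ nthPrime k ↔ j = k := by
  rw [Nat.prime_dvd_prime_iff_eq (prime_nthPrime j) (prime_nthPrime k),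
    strictMono_nthPrime.injective.eq_iff]

section Rough

variable {n M r : ℕ} {s : ℂ}

/-- `r` is `n`-rough if it has none of the first `n` primes as a factor. -/
def IsRough (n r : ℕ) : Prop := ∀ k < n, ¬ nthPrime k ∣ r

open Classical in
/-- The `n`-rough numbers in `[1, M]`. -/
noncomputable def roughUpTo (n M : ℕ) : Finset ℕ := {r ∈ Finset.Icc 1 M | IsRough n r}

/-- The Dirichlet polynomial over the `n`-rough numbers in `[1, M]`, a truncation of the Dirichlet
series of `ζ(s) * eulerFactors n s`. -/
noncomputable def roughSum (n M : ℕ) (s : ℂ) : ℂ := ∑ r ∈ roughUpTo n M, (r : ℂ) ^ (-s)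

/-- The product `∏ (1 - p ^ (-s))` over the first `n` primes `p`, i.e. the *reciprocal* of the
partial Euler product of `ζ`. -/
noncomputable def eulerFactors (n : ℕ) (s : ℂ) : ℂ :=
  ∏ k ∈ Finset.range n, (1 - (nthPrime k : ℂ) ^ (-s))

lemma mem_roughUpTo : r ∈ roughUpTo n M ↔ (1 ≤ r ∧ r ≤ M) ∧ IsRough n r := by
  simp [roughUpTo]

lemma zero_notMem_roughUpTo : 0 ∉ roughUpTo n M := by
  simp [mem_roughUpTo]

lemma isRough_one (n : ℕ) : IsRough n 1 := fun k _ => (prime_nthPrime k).not_dvd_one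

lemma one_mem_roughUpTo (n : ℕ) (hM : 1 ≤ M) : 1 ∈ roughUpTo n M :=
  mem_roughUpTo.2 ⟨⟨le_rfl, hM⟩, isRough_one n⟩

lemma isRough_nthPrime_mul : IsRough n (nthPrime n * r) ↔ IsRough n r := by
  refine forall₂_congr fun k hk => ?_
  rw [(prime_nthPrime k).dvd_mul, nthPrime_dvd_nthPrime_iff, or_iff_right hk.ne]

lemma isRough_succ : IsRough (n + 1) r ↔ IsRough n r ∧ ¬ nthPrime n ∣ r :=
  Nat.forall_lt_succ_right

lemma roughUpTo_zero (M : ℕ) : roughUpTo 0 M = Finset.Icc 1 M := by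
  ext r
  simp [mem_roughUpTo, IsRough]

lemma roughUpTo_succ (n M : ℕ) :
    roughUpTo (n + 1) M = {r ∈ roughUpTo n M | ¬ nthPrime n ∣ r} := by
  ext r
  simp only [Finset.mem_filter, mem_roughUpTo, isRough_succ, and_assoc]

lemma filter_image_nthPrime_mul_roughUpTo (n M : ℕ) :
    {m ∈ (roughUpTo n M).image (nthPrime n * ·) | m ≤ M} =
      {r ∈ roughUpTo n M | nthPrime n ∣ r} := by
  ext m
  simp only [Finset.mem_filter, Finset.mem_image, mem_roughUpTo]
  constructor
  · rintro ⟨⟨r, ⟨⟨hr, -⟩, hrough⟩, rfl⟩, hm⟩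
    exact ⟨⟨⟨Nat.mul_pos (prime_nthPrime n).pos hr, hm⟩, isRough_nthPrime_mul.2 hrough⟩,
      dvd_mul_right _ _⟩
  · rintro ⟨⟨⟨hpos, hm⟩, hrough⟩, r, rfl⟩
    exact ⟨⟨r, ⟨⟨Nat.pos_of_mul_pos_left hpos,
      (Nat.le_mul_of_pos_left r (prime_nthPrime n).pos).trans hm⟩,
      isRough_nthPrime_mul.1 hrough⟩, rfl⟩, hm⟩

lemma roughSum_mul_nthPrime_cpow (n M : ℕ) (s : ℂ) :
    roughSum n M s * (nthPrime n : ℂ) ^ (-s) =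
      ∑ m ∈ (roughUpTo n M).image (nthPrime n * ·), (m : ℂ) ^ (-s) := by
  rw [Finset.sum_image ((mul_right_injective₀ (prime_nthPrime n).ne_zero).injOn), roughSum,
    Finset.sum_mul]
  refine Finset.sum_congr rfl fun r _ => ?_
  rw [Nat.cast_mul, natCast_mul_natCast_cpow, mul_comm]

lemma roughSum_mul_one_sub (n M : ℕ) (s : ℂ) :
    roughSum n M s * (1 - (nthPrime n : ℂ) ^ (-s)) = roughSum (n + 1) M s -
      ∑ m ∈ (roughUpTo n M).image (nthPrime n * ·) with M < m, (m : ℂ) ^ (-s) := by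
  rw [mul_one_sub, roughSum_mul_nthPrime_cpow,
    ← Finset.sum_filter_add_sum_filter_not _ (· ≤ M), filter_image_nthPrime_mul_roughUpTo,
    roughSum, roughSum, roughUpTo_succ,
    ← Finset.sum_filter_add_sum_filter_not (roughUpTo n M) (nthPrime n ∣ ·)]
  simp only [not_le]
  ring

lemma eulerFactors_succ (n : ℕ) (s : ℂ) :
    eulerFactors (n + 1) s = eulerFactors n s * (1 - (nthPrime n : ℂ) ^ (-s)) :=
  Finset.prod_range_succ _ _

lemma continuous_natCast_cpow_neg (hr : r ≠ 0) : Continuous fun s : ℂ => (r : ℂ) ^ (-s) :=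
  continuous_neg.const_cpow (.inl (by exact_mod_cast hr))

lemma continuous_eulerFactors (n : ℕ) : Continuous (eulerFactors n) :=
  continuous_finsetProd _ fun k _ =>
    continuous_const.sub (continuous_natCast_cpow_neg (prime_nthPrime k).ne_zero)

lemma continuous_sum_natCast_cpow_neg {A : Finset ℕ} (hA : 0 ∉ A) :
    Continuous fun s : ℂ => ∑ r ∈ A, (r : ℂ) ^ (-s) :=
  continuous_finsetSum _ fun _ hr => continuous_natCast_cpow_neg (ne_of_mem_of_not_mem hr hA)

lemma norm_natCast_cpow_neg_le_one (hr : r ≠ 0) (hs : 0 ≤ s.re) : ‖(r : ℂ) ^ (-s)‖ ≤ 1 := by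
  rw [norm_natCast_cpow_of_pos hr.bot_lt]
  exact Real.rpow_le_one_of_one_le_of_nonpos
    (by exact_mod_cast Nat.one_le_iff_ne_zero.2 hr) (by simpa using hs)

end Rough

section RoughMeanSquare

variable {σ₁ σ₂ η : ℝ}

lemma continuousOn_riemannZeta_mul_eulerFactors_sub_roughSum (σ₁ : ℝ) (h2 : σ₂ < 1) (n M : ℕ) :
    ContinuousOn (fun s => riemannZeta s * eulerFactors n s - roughSum n M s)
      (re ⁻¹' Set.Icc σ₁ σ₂) := by
  have hζ : ContinuousOn riemannZeta (re ⁻¹' Set.Icc σ₁ σ₂) := fun s hs =>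
    (differentiableAt_riemannZeta (by rintro rfl; exact hs.2.not_gt h2)).continuousAt
      |>.continuousWithinAt
  exact (hζ.mul (continuous_eulerFactors n).continuousOn).sub
    (continuous_sum_natCast_cpow_neg zero_notMem_roughUpTo).continuousOn

/-- Each factor `1 - p ^ (-s)` is bounded by `2`, and multiplying by it only creates new terms
`m ^ (-s)` with `m > M`. -/
lemma exists_meanSquareLE_riemannZeta_mul_eulerFactors_sub_roughSum (h1 : 1 / 2 < σ₁)
    (h2 : σ₂ < 1) (n : ℕ) (hη : 0 < η) :
    ∃ M₀ : ℕ, ∀ M ≥ M₀, MeanSquareLE σ₁ σ₂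
      (fun s => riemannZeta s * eulerFactors n s - roughSum n M s) η := by
  induction n generalizing η with
  | zero =>
    simpa [eulerFactors, roughSum, roughUpTo_zero] using
      exists_meanSquareLE_riemannZeta_sub_sum h1 h2 hη
  | succ n ih =>
    obtain ⟨M₁, hM₁⟩ := ih (η := η / 16) (by positivity)
    obtain ⟨M₂, hM₂⟩ := exists_forall_sum_rpow_le h1
      (by positivity : 0 < η / (8 * (Real.exp 1 * √Real.pi)))
    refine ⟨max M₁ M₂, fun M hM => ?_⟩
    set A : Finset ℕ := {m ∈ (roughUpTo n M).image (nthPrime n * ·) | M < m}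
    have hA0 : 0 ∉ A := by simp [A]
    have hA := hM₂ A fun m hm =>
      (le_of_max_le_right hM).trans_lt (Finset.mem_filter.1 hm).2
    have hp0 := (prime_nthPrime n).ne_zero
    have hfactor : Continuous fun s : ℂ => 1 - (nthPrime n : ℂ) ^ (-s) :=
      continuous_const.sub (continuous_natCast_cpow_neg hp0)
    have hfactor_le (s : ℂ) (hs : s.re ∈ Set.Icc σ₁ σ₂) : ‖1 - (nthPrime n : ℂ) ^ (-s)‖ ≤ 2 := by
      refine (norm_sub_le _ _).trans ?_
      have := norm_natCast_cpow_neg_le_one hp0 (by linarith [hs.1] : 0 ≤ s.re)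
      rw [norm_one]
      linarith
    have hcont := continuousOn_riemannZeta_mul_eulerFactors_sub_roughSum σ₁ h2 n M
    refine ((((hM₁ M (le_of_max_le_left hM)).mul_left hfactor.continuousOn hcont hfactor_le).sub
      (meanSquareLE_sum_cpow σ₁ σ₂ hA0) (hfactor.continuousOn.mul hcont)
      (continuous_sum_natCast_cpow_neg hA0).continuousOn).mono ?_).congr fun s _ => ?_
    · calc _ ≤ 2 * (2 ^ 2 * (η / 16)) + 2 * (Real.exp 1 *
              (√Real.pi * (2 * (η / (8 * (Real.exp 1 * √Real.pi)))))) := by gcongr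
        _ = η := by field_simp; ring
    · linear_combination
        -roughSum_mul_one_sub n M s - riemannZeta s * eulerFactors_succ n s

end RoughMeanSquare

/-! ### Parseval for almost periodic sums -/

lemma norm_integral_cexp_sub_ite_le (x T : ℝ) :
    ‖(∫ t in (0 : ℝ)..T, cexp (-(I * t * x))) - if x = 0 then (T : ℂ) else 0‖ ≤ 2 / |x| := by
  rcases eq_or_ne x 0 with rfl | hx
  · simp
  have hlin (t : ℝ) : -(I * t * x) = -(I * x) * t := by ring
  have hend (t : ℝ) : ‖cexp (-(I * x) * t)‖ = 1 := by rw [← hlin, norm_cexp_neg_I_mul_mul]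
  simp only [hlin]
  rw [integral_exp_mul_complex (by simp [hx]), if_neg hx, sub_zero, norm_div,
    show ‖-(I * x)‖ = |x| by simp]
  gcongr
  refine (norm_sub_le _ _).trans ?_
  rw [hend, hend]
  norm_num

section Parseval

variable {ι : Type*} (s : Finset ι) (f : ι → ℝ) (c : ι → ℂ)

lemma norm_sq_sum_mul_cexp (t : ℝ) :
    ((‖∑ i ∈ s, c i * cexp (-(I * t * f i))‖ ^ 2 : ℝ) : ℂ) =
      ∑ i ∈ s, ∑ j ∈ s, c i * (starRingEnd ℂ) (c j) * cexp (-(I * t * (f i - f j : ℝ))) := by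
  rw [ofReal_pow, ← mul_conj', map_sum, Finset.sum_mul_sum]
  refine Finset.sum_congr rfl fun i _ => Finset.sum_congr rfl fun j _ => ?_
  rw [map_mul, conj_cexp_neg_I_mul_mul, mul_mul_mul_comm, ← exp_add]
  congr 2; push_cast; ring

lemma integral_norm_sq_sum_mul_cexp (T : ℝ) :
    ((∫ t in (0 : ℝ)..T, ‖∑ i ∈ s, c i * cexp (-(I * t * f i))‖ ^ 2 : ℝ) : ℂ) =
      ∑ i ∈ s, ∑ j ∈ s, c i * (starRingEnd ℂ) (c j) *
        ∫ t in (0 : ℝ)..T, cexp (-(I * t * (f i - f j : ℝ))) := by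
  rw [← intervalIntegral.integral_ofReal]
  simp_rw [norm_sq_sum_mul_cexp]
  rw [intervalIntegral.integral_finsetSum fun i _ =>
    (continuous_finsetSum _ fun j _ => by fun_prop).intervalIntegrable _ _]
  refine Finset.sum_congr rfl fun i _ => ?_
  rw [intervalIntegral.integral_finsetSum fun j _ =>
    Continuous.intervalIntegrable (by fun_prop) _ _]
  exact Finset.sum_congr rfl fun j _ => intervalIntegral.integral_const_mul _ _

variable {s f}

lemma mul_sum_norm_sq_eq_sum_sum_ite (hf : Set.InjOn f s) (T : ℝ) :
    ((T * ∑ i ∈ s, ‖c i‖ ^ 2 : ℝ) : ℂ) =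
      ∑ i ∈ s, ∑ j ∈ s, c i * (starRingEnd ℂ) (c j) * if f i - f j = 0 then (T : ℂ) else 0 := by
  push_cast
  rw [Finset.mul_sum]
  refine Finset.sum_congr rfl fun i hi => ?_
  rw [Finset.sum_eq_single_of_mem i hi, if_pos (sub_self _), mul_conj', mul_comm]
  intro j hj hji
  rw [if_neg, mul_zero]
  exact fun h => hji (hf hj hi (sub_eq_zero.1 h).symm)

lemma exists_abs_integral_norm_sq_sum_mul_cexp_sub_le (hf : Set.InjOn f s) :
    ∃ C : ℝ, 0 ≤ C ∧ ∀ (c : ι → ℂ) (T : ℝ),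
      |(∫ t in (0 : ℝ)..T, ‖∑ i ∈ s, c i * cexp (-(I * t * f i))‖ ^ 2) -
        T * ∑ i ∈ s, ‖c i‖ ^ 2| ≤ C * (∑ i ∈ s, ‖c i‖) ^ 2 := by
  set C := ∑ i ∈ s, ∑ j ∈ s, 2 / |f i - f j|
  refine ⟨C, by positivity, fun c T => ?_⟩
  have hC (i : ι) (hi : i ∈ s) (j : ι) (hj : j ∈ s) : 2 / |f i - f j| ≤ C :=
    (Finset.single_le_sum (f := fun j => 2 / |f i - f j|) (fun j _ => by positivity) hj).trans
      (Finset.single_le_sum (f := fun i => ∑ j ∈ s, 2 / |f i - f j|) (fun i _ => by positivity) hi)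
  rw [← Real.norm_eq_abs, ← norm_real, ofReal_sub, integral_norm_sq_sum_mul_cexp,
    mul_sum_norm_sq_eq_sum_sum_ite c hf]
  simp only [← Finset.sum_sub_distrib, ← mul_sub]
  calc _ ≤ ∑ i ∈ s, ∑ j ∈ s, ‖c i‖ * ‖c j‖ * C := by
        refine norm_sum_le_of_le _ fun i hi => norm_sum_le_of_le _ fun j hj => ?_
        rw [norm_mul, norm_mul, RCLike.norm_conj]
        gcongr
        exact (norm_integral_cexp_sub_ite_le _ _).trans (hC i hi j hj)
    _ = C * (∑ i ∈ s, ‖c i‖) ^ 2 := by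
        simp only [← Finset.sum_mul, ← Finset.mul_sum]
        ring

end Parseval

section Frequencies

variable {n : ℕ} {e e' : Fin n → ℕ} {r r' : ℕ}

/-- The smooth number `∏ p_k ^ e_k` with exponents `e` at the first `n` primes. -/
noncomputable def nthPrimePowProd {n : ℕ} (e : Fin n → ℕ) : ℕ := ∏ k : Fin n, nthPrime k ^ e k

lemma nthPrimePowProd_pos (e : Fin n → ℕ) : 0 < nthPrimePowProd e :=
  Finset.prod_pos fun k _ => pow_pos (prime_nthPrime k).pos _

lemma log_nthPrimePowProd (e : Fin n → ℕ) :
    Real.log (nthPrimePowProd e) = ∑ k : Fin n, (e k : ℝ) * Real.log (nthPrime k) := by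
  rw [nthPrimePowProd, Nat.cast_prod, Real.log_prod fun k _ => by
    exact_mod_cast (pow_pos (prime_nthPrime k).pos _).ne']
  simp only [Nat.cast_pow, Real.log_pow]

lemma IsRough.coprime_nthPrimePowProd (hr : IsRough n r) (e : Fin n → ℕ) :
    (nthPrimePowProd e).Coprime r :=
  Nat.Coprime.prod_left fun k _ =>
    (((prime_nthPrime k).coprime_iff_not_dvd).2 (hr k k.2)).pow_left _

lemma IsRough.pow (hr : IsRough n r) (N : ℕ) : IsRough n (r ^ N) :=
  fun k hk h => hr k hk ((prime_nthPrime k).dvd_of_dvd_pow h)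

lemma factorization_nthPrimePowProd (e : Fin n → ℕ) (j : Fin n) :
    (nthPrimePowProd e).factorization (nthPrime j) = e j := by
  rw [nthPrimePowProd, Nat.factorization_prod (g := fun k : Fin n => nthPrime k ^ e k)
    fun k _ => (pow_pos (prime_nthPrime k).pos _).ne', Finset.sum_apply',
    Finset.sum_eq_single_of_mem j (Finset.mem_univ j)]
  · simp [(prime_nthPrime j).factorization_pow]
  · intro k _ hk
    rw [(prime_nthPrime k).factorization_pow, Finsupp.single_eq_of_ne]
    exact fun h => hk (Fin.ext (strictMono_nthPrime.injective h.symm))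

lemma injective_nthPrimePowProd : Function.Injective (nthPrimePowProd (n := n)) := fun e e' h => by
  funext j
  rw [← factorization_nthPrimePowProd e, h, factorization_nthPrimePowProd]

lemma nthPrimePowProd_mul_inj (hr : IsRough n r) (hr' : IsRough n r')
    (h : nthPrimePowProd e * r = nthPrimePowProd e' * r') : e = e' ∧ r = r' := by
  have hsmooth : nthPrimePowProd e = nthPrimePowProd e' := Nat.dvd_antisymm
    ((hr'.coprime_nthPrimePowProd e).dvd_of_dvd_mul_right (Dvd.intro _ h))
    ((hr.coprime_nthPrimePowProd e').dvd_of_dvd_mul_right (Dvd.intro _ h.symm))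
  rw [hsmooth] at h
  exact ⟨injective_nthPrimePowProd hsmooth, Nat.eq_of_mul_eq_mul_left (nthPrimePowProd_pos e') h⟩

lemma log_add_natCast_mul_log_inj {N : ℕ} (hN : N ≠ 0) (hr0 : r ≠ 0) (hr0' : r' ≠ 0)
    (hr : IsRough n r) (hr' : IsRough n r')
    (h : Real.log (nthPrimePowProd e) + N * Real.log r =
      Real.log (nthPrimePowProd e') + N * Real.log r') : e = e' ∧ r = r' := by
  have hlog {e : Fin n → ℕ} {r : ℕ} (hr0 : r ≠ 0) :
      Real.log (nthPrimePowProd e) + N * Real.log r = Real.log (nthPrimePowProd e * r ^ N : ℕ) := by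
    rw [Nat.cast_mul, Nat.cast_pow, Real.log_mul (by exact_mod_cast (nthPrimePowProd_pos e).ne')
      (by positivity), Real.log_pow]
  have hpos {e : Fin n → ℕ} {r : ℕ} (hr0 : r ≠ 0) : (0 : ℝ) < (nthPrimePowProd e * r ^ N : ℕ) := by
    exact_mod_cast Nat.mul_pos (nthPrimePowProd_pos e) (pow_pos hr0.bot_lt N)
  rw [hlog hr0, hlog hr0'] at h
  obtain ⟨he, hpow⟩ := nthPrimePowProd_mul_inj (hr.pow N) (hr'.pow N)
    (by exact_mod_cast Real.log_injOn_pos (hpos hr0) (hpos hr0') h)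
  exact ⟨he, Nat.pow_left_injective hN hpow⟩

lemma log_add_intCast_mul_log_inj {c : ℤ} (hc : c ≠ 0) (hr0 : r ≠ 0) (hr0' : r' ≠ 0)
    (hr : IsRough n r) (hr' : IsRough n r')
    (h : Real.log (nthPrimePowProd e) + c * Real.log r =
      Real.log (nthPrimePowProd e') + c * Real.log r') : e = e' ∧ r = r' := by
  obtain ⟨N, rfl | rfl⟩ := Int.eq_nat_or_neg c
  · exact log_add_natCast_mul_log_inj (by simpa using hc) hr0 hr0' hr hr' (by exact_mod_cast h)
  · have hswap := log_add_natCast_mul_log_inj (e := e) (e' := e') (by simpa using hc) hr0' hr0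
      hr' hr (by push_cast at h; linarith)
    exact ⟨hswap.1, hswap.2.symm⟩

end Frequencies

/-! ### The Fejér-type weight -/

/-- The value at `t` of the character `t ↦ p_k ^ (-it)`. -/
noncomputable def nthPrimePhase (k : ℕ) (t : ℝ) : ℂ := cexp (-(I * t * (Real.log (nthPrime k) : ℝ)))

/-- A product of geometric sums. For unimodular `θ` its squared modulus is a product of Fejér
kernels (up to normalisation) and concentrates at those `t` for which `θ_k * p_k ^ (-it)` is close
to `1` for every `k < n`. -/
noncomputable def fejerProd {n : ℕ} (L : Fin n → ℕ) (θ : Fin n → ℂ) (t : ℝ) : ℂ :=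
  ∏ k : Fin n, ∑ j ∈ Finset.range (L k), (θ k * nthPrimePhase k t) ^ j

lemma norm_nthPrimePhase (k : ℕ) (t : ℝ) : ‖nthPrimePhase k t‖ = 1 :=
  norm_cexp_neg_I_mul_mul _ _

@[fun_prop]
lemma continuous_nthPrimePhase (k : ℕ) : Continuous (nthPrimePhase k) := by
  unfold nthPrimePhase
  fun_prop

section FejerProd

variable {n : ℕ} {L : Fin n → ℕ} {θ : Fin n → ℂ}

@[fun_prop]
lemma continuous_fejerProd (L : Fin n → ℕ) (θ : Fin n → ℂ) : Continuous (fejerProd L θ) := by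
  unfold fejerProd
  fun_prop

lemma norm_fejerProd_le (L : Fin n → ℕ) (hθ : ∀ k, ‖θ k‖ = 1) (t : ℝ) :
    ‖fejerProd L θ t‖ ≤ ∏ k, (L k : ℝ) := by
  rw [fejerProd, norm_prod]
  refine Finset.prod_le_prod (fun _ _ => norm_nonneg _) fun k _ => ?_
  refine (norm_sum_le _ _).trans_eq ?_
  simp [hθ, norm_nthPrimePhase]

lemma fejerProd_eq_sum (L : Fin n → ℕ) (θ : Fin n → ℂ) (t : ℝ) :
    fejerProd L θ t = ∑ e ∈ Fintype.piFinset fun k => Finset.range (L k),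
      (∏ k, θ k ^ e k) * cexp (-(I * t * (Real.log (nthPrimePowProd e) : ℝ))) := by
  rw [fejerProd, Finset.prod_univ_sum]
  refine Finset.sum_congr rfl fun e _ => ?_
  simp only [mul_pow, Finset.prod_mul_distrib, nthPrimePhase, ← exp_nat_mul, ← exp_sum,
    log_nthPrimePowProd, ofReal_sum, ofReal_mul, ofReal_natCast, Finset.mul_sum,
    ← Finset.sum_neg_distrib]
  congr 3 with k
  ring

lemma fejerProd_mul_sum_eq_sum (L : Fin n → ℕ) (θ : Fin n → ℂ) (c : ℤ) (A : Finset ℕ) (d : ℕ → ℂ)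
    (t : ℝ) :
    fejerProd L θ t * ∑ r ∈ A, d r * cexp (-(I * (c * t : ℝ) * (Real.log r : ℝ))) =
      ∑ x ∈ (Fintype.piFinset fun k => Finset.range (L k)) ×ˢ A, (∏ k, θ k ^ x.1 k) * d x.2 *
        cexp (-(I * t * (Real.log (nthPrimePowProd x.1) + c * Real.log x.2 : ℝ))) := by
  rw [fejerProd_eq_sum, Finset.sum_mul_sum, Finset.sum_product]
  refine Finset.sum_congr rfl fun e _ => Finset.sum_congr rfl fun r _ => ?_
  rw [mul_mul_mul_comm, ← exp_add]
  congr 2; push_cast; ring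

/-- The frequencies `log m + c * log r`, with `m` smooth and `r` rough, are pairwise distinct, so
Parseval decouples the weight from the Dirichlet polynomial. -/
lemma exists_abs_integral_fejerProd_mul_sum_sub_le (L : Fin n → ℕ) (hθ : ∀ k, ‖θ k‖ = 1) {c : ℤ}
    (hc : c ≠ 0) {A : Finset ℕ} (hA0 : 0 ∉ A) (hA : ∀ r ∈ A, IsRough n r) :
    ∃ C : ℝ, 0 ≤ C ∧ ∀ (d : ℕ → ℂ) (T : ℝ),
      |(∫ t in (0 : ℝ)..T, ‖fejerProd L θ t‖ ^ 2 *
          ‖∑ r ∈ A, d r * cexp (-(I * (c * t : ℝ) * (Real.log r : ℝ)))‖ ^ 2) -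
        T * ((∏ k, (L k : ℝ)) * ∑ r ∈ A, ‖d r‖ ^ 2)| ≤ C * (∑ r ∈ A, ‖d r‖) ^ 2 := by
  set E := Fintype.piFinset fun k => Finset.range (L k)
  obtain ⟨C, hC0, hC⟩ := exists_abs_integral_norm_sq_sum_mul_cexp_sub_le (s := E ×ˢ A)
    (f := fun x => Real.log (nthPrimePowProd x.1) + c * Real.log x.2) fun x hx y hy hxy => by
      rw [Finset.mem_coe, Finset.mem_product] at hx hy
      exact Prod.ext_iff.2 (log_add_intCast_mul_log_inj hc (ne_of_mem_of_not_mem hx.2 hA0)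
        (ne_of_mem_of_not_mem hy.2 hA0) (hA _ hx.2) (hA _ hy.2) hxy)
  refine ⟨C * (∏ k, (L k : ℝ)) ^ 2, by positivity, fun d T => ?_⟩
  have hsum (φ : ℕ → ℝ) : ∑ x ∈ E ×ˢ A, φ x.2 = (∏ k, (L k : ℝ)) * ∑ r ∈ A, φ r := by
    simp [Finset.sum_product, E]
  have h := hC (fun x => (∏ k, θ k ^ x.1 k) * d x.2) T
  simp only [← fejerProd_mul_sum_eq_sum, norm_mul, norm_prod, norm_pow, hθ, one_pow,
    Finset.prod_const_one, one_mul, E] at h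
  rw [hsum fun r => ‖d r‖, hsum fun r => ‖d r‖ ^ 2] at h
  simpa only [mul_pow, mul_assoc] using h

lemma exists_abs_integral_norm_sq_fejerProd_sub_le (L : Fin n → ℕ) (hθ : ∀ k, ‖θ k‖ = 1) :
    ∃ C : ℝ, ∀ T : ℝ,
      |(∫ t in (0 : ℝ)..T, ‖fejerProd L θ t‖ ^ 2) - T * ∏ k, (L k : ℝ)| ≤ C := by
  obtain ⟨C, -, hC⟩ := exists_abs_integral_fejerProd_mul_sum_sub_le L hθ one_ne_zero
    (A := {1}) (by simp) (by simpa using isRough_one n)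
  exact ⟨C, fun T => by simpa using hC (fun _ => 1) T⟩

lemma fejerProd_mul_sub_one (L : Fin n → ℕ) (θ : Fin n → ℂ) (k : Fin n) (t : ℝ) :
    fejerProd L θ t * (θ k * nthPrimePhase k t - 1) =
      ((θ k * nthPrimePhase k t) ^ L k - 1) * fejerProd (Function.update L k 1) θ t := by
  have herase : ∏ j ∈ Finset.univ.erase k,
        ∑ i ∈ Finset.range (Function.update L k 1 j), (θ j * nthPrimePhase j t) ^ i =
      ∏ j ∈ Finset.univ.erase k, ∑ i ∈ Finset.range (L j), (θ j * nthPrimePhase j t) ^ i :=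
    Finset.prod_congr rfl fun j hj => by rw [Function.update_of_ne (Finset.ne_of_mem_erase hj)]
  rw [fejerProd, fejerProd, ← Finset.mul_prod_erase _ _ (Finset.mem_univ k),
    ← Finset.mul_prod_erase Finset.univ _ (Finset.mem_univ k), herase, ← geom_sum_mul]
  simp only [Function.update_self, Finset.range_one, Finset.sum_singleton, pow_zero]
  ring

lemma one_le_prod_natCast (hL : ∀ k, L k ≠ 0) : 1 ≤ ∏ k, (L k : ℝ) :=
  Finset.one_le_prod fun k _ => by exact_mod_cast Nat.one_le_iff_ne_zero.2 (hL k)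

lemma mul_prod_update_one (L : Fin n → ℕ) (k : Fin n) :
    L k * ∏ j, Function.update L k 1 j = ∏ j, L j := by
  rw [Finset.prod_update_of_mem (Finset.mem_univ k), one_mul, Finset.sdiff_singleton_eq_erase,
    Finset.mul_prod_erase _ _ (Finset.mem_univ k)]

variable (hL : ∀ k, L k ≠ 0) (hθ : ∀ k, ‖θ k‖ = 1)
include hL hθ

lemma eventually_le_integral_norm_sq_fejerProd :
    ∀ᶠ T : ℝ in atTop, (∏ k, (L k : ℝ)) / 2 * T ≤ ∫ t in (0 : ℝ)..T, ‖fejerProd L θ t‖ ^ 2 := by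
  obtain ⟨C, hC⟩ := exists_abs_integral_norm_sq_fejerProd_sub_le L hθ
  have hprod := one_le_prod_natCast hL
  filter_upwards [eventually_ge_atTop (C / ((∏ k, (L k : ℝ)) / 2))] with T hT
  rw [div_le_iff₀ (by positivity)] at hT
  linarith [(abs_le.1 (hC T)).1]

lemma eventually_integral_norm_sq_fejerProd_mul_sub_one_le (k : Fin n) :
    ∀ᶠ T : ℝ in atTop,
      ∫ t in (0 : ℝ)..T, ‖fejerProd L θ t‖ ^ 2 * ‖θ k * nthPrimePhase k t - 1‖ ^ 2 ≤
        5 / L k * (∏ k, (L k : ℝ)) * T := by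
  obtain ⟨C, hC⟩ := exists_abs_integral_norm_sq_fejerProd_sub_le (Function.update L k 1) hθ
  set D : ℝ := ∏ j, (Function.update L k 1 j : ℝ) with hD
  have hD1 : 1 ≤ D := one_le_prod_natCast fun j => by
    rcases eq_or_ne j k with rfl | hj <;> simp [*]
  have hprod : 5 / L k * (∏ k, (L k : ℝ)) = 5 * D := by
    have : (L k : ℝ) ≠ 0 := by exact_mod_cast hL k
    rw [div_mul_eq_mul_div, div_eq_iff this, mul_assoc, mul_comm D, hD]
    exact_mod_cast congrArg _ (mul_prod_update_one L k).symm
  filter_upwards [eventually_ge_atTop (4 * C), eventually_ge_atTop 0] with T hT hT0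
  calc _ ≤ ∫ t in (0 : ℝ)..T, 4 * ‖fejerProd (Function.update L k 1) θ t‖ ^ 2 := by
        refine intervalIntegral.integral_mono_on hT0
          (Continuous.intervalIntegrable (by fun_prop) _ _)
          (Continuous.intervalIntegrable (by fun_prop) _ _) fun t _ => ?_
        rw [← mul_pow, ← norm_mul, fejerProd_mul_sub_one, norm_mul, mul_pow]
        have htwo : ‖(θ k * nthPrimePhase k t) ^ L k - 1‖ ≤ 2 := by
          refine (norm_sub_le _ _).trans_eq ?_
          rw [norm_pow, norm_mul, hθ, norm_nthPrimePhase]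
          norm_num
        gcongr
        nlinarith [norm_nonneg ((θ k * nthPrimePhase k t) ^ L k - 1)]
    _ ≤ _ := by
        rw [intervalIntegral.integral_const_mul, hprod]
        nlinarith [(abs_le.1 (hC T)).2]

lemma eventually_integral_norm_sq_fejerProd_mul_roughSum_sub_one_le {c : ℤ} (hc : c ≠ 0)
    {M : ℕ} (hM : 1 ≤ M) {σ₁ κ : ℝ} (hσ₁ : 0 ≤ σ₁) (hκ : 0 < κ)
    (htail : ∑ r ∈ (roughUpTo n M).erase 1, (r : ℝ) ^ (-2 * σ₁) ≤ κ / 2) :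
    ∀ᶠ T : ℝ in atTop, ∀ s : ℂ, σ₁ ≤ s.re →
      ∫ t in (0 : ℝ)..T, ‖fejerProd L θ t‖ ^ 2 * ‖roughSum n M (s + (c * t : ℝ) * I) - 1‖ ^ 2 ≤
        κ * (∏ k, (L k : ℝ)) * T := by
  set A := (roughUpTo n M).erase 1
  have hA0 : 0 ∉ A := fun h => zero_notMem_roughUpTo (Finset.mem_of_mem_erase h)
  obtain ⟨C, hC0, hC⟩ := exists_abs_integral_fejerProd_mul_sum_sub_le L hθ hc hA0
    fun r hr => (mem_roughUpTo.1 (Finset.mem_of_mem_erase hr)).2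
  have hprod := one_le_prod_natCast hL
  filter_upwards [eventually_ge_atTop (C * (A.card : ℝ) ^ 2 / (κ / 2)), eventually_ge_atTop 0]
    with T hT hT0 s hs
  rw [div_le_iff₀ (by positivity)] at hT
  have hexpand (t : ℝ) : roughSum n M (s + (c * t : ℝ) * I) - 1 =
      ∑ r ∈ A, (r : ℂ) ^ (-s) * cexp (-(I * (c * t : ℝ) * (Real.log r : ℝ))) := by
    rw [roughSum, ← Finset.add_sum_erase _ _ (one_mem_roughUpTo n hM), Nat.cast_one, one_cpow,
      add_sub_cancel_left]
    exact Finset.sum_congr rfl fun r hr =>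
      natCast_cpow_neg_add_mul_I (ne_of_mem_of_not_mem hr hA0) s _
  have hsum : ∑ r ∈ A, ‖(r : ℂ) ^ (-s)‖ ≤ A.card := by
    simpa using Finset.sum_le_card_nsmul A _ 1 fun r hr =>
      norm_natCast_cpow_neg_le_one (ne_of_mem_of_not_mem hr hA0) (hσ₁.trans hs)
  have hsum_sq : ∑ r ∈ A, ‖(r : ℂ) ^ (-s)‖ ^ 2 ≤ κ / 2 := by
    refine le_trans (Finset.sum_le_sum fun r hr => ?_) htail
    have hr0 := ne_of_mem_of_not_mem hr hA0
    rw [norm_sq_natCast_cpow_neg hr0]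
    exact Real.rpow_le_rpow_of_exponent_le (by exact_mod_cast Nat.one_le_iff_ne_zero.2 hr0)
      (by linarith)
  simp only [hexpand]
  calc _ ≤ T * ((∏ k, (L k : ℝ)) * ∑ r ∈ A, ‖(r : ℂ) ^ (-s)‖ ^ 2) +
          C * (∑ r ∈ A, ‖(r : ℂ) ^ (-s)‖) ^ 2 := by
        linarith [(abs_le.1 (hC (fun r => (r : ℂ) ^ (-s)) T)).2]
    _ ≤ T * ((∏ k, (L k : ℝ)) * (κ / 2)) + T * (κ / 2) * (∏ k, (L k : ℝ)) := by
        refine add_le_add (by gcongr) (le_trans ?_ (le_mul_of_one_le_right (by positivity) hprod))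
        exact le_trans (by gcongr) hT
    _ = _ := by ring

end FejerProd

/-! ### The tail of the Euler product in mean square -/

/-- The relative error made in replacing `ζ` by the Euler product over the first `n` primes. -/
noncomputable def zetaTail (n : ℕ) (s : ℂ) : ℂ := riemannZeta s * eulerFactors n s - 1

lemma integral_comp_add_mul_le {f : ℝ → ℝ} (hf : Continuous f) (h0 : ∀ x, 0 ≤ f x) {c : ℝ}
    (hc : c ≠ 0) {y Y T : ℝ} (hy : |y| ≤ Y) (hT : 0 ≤ T) :
    ∫ t in (0 : ℝ)..T, f (y + c * t) ≤ |c|⁻¹ * ∫ u in (-(|c| * T + Y))..(|c| * T + Y), f u := by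
  obtain ⟨hy1, hy2⟩ := abs_le.1 hy
  have hcT : 0 ≤ |c| * T := by positivity
  have hB : -(|c| * T + Y) ≤ |c| * T + Y := by linarith
  have hsub : Set.uIoc y (y + c * T) ⊆ Set.uIoc (-(|c| * T + Y)) (|c| * T + Y) := by
    obtain ⟨h1, h2⟩ := abs_le.1 (abs_mul c T).le
    rw [abs_of_nonneg hT] at h1 h2
    exact Set.uIoc_subset_uIoc_of_uIcc_subset_uIcc <| Set.uIcc_subset_uIcc
      (Set.mem_uIcc_of_le (by linarith) (by linarith))
      (Set.mem_uIcc_of_le (by linarith) (by linarith))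
  calc _ ≤ |c⁻¹ * ∫ u in y..(y + c * T), f u| := by
        rw [intervalIntegral.integral_comp_add_mul f hc y, smul_eq_mul, mul_zero, add_zero]
        exact le_abs_self _
    _ ≤ |c|⁻¹ * |∫ u in (-(|c| * T + Y))..(|c| * T + Y), f u| := by
        rw [abs_mul, abs_inv]
        exact mul_le_mul_of_nonneg_left (intervalIntegral.abs_integral_mono_interval hsub
          (.of_forall h0) (hf.intervalIntegrable _ _)) (by positivity)
    _ = _ := by rw [abs_of_nonneg (intervalIntegral.integral_nonneg hB fun u _ => h0 u)]

section Tail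

variable {σ₁ σ₂ η κ : ℝ} {n : ℕ}

lemma add_mul_I_eq_re_add_mul_I (s : ℂ) (x : ℝ) : s + x * I = s.re + (s.im + x : ℝ) * I := by
  conv_lhs => rw [← re_add_im s]
  push_cast; ring

lemma MeanSquareLE.eventually_integral_add_mul_le {F : ℂ → ℂ} (hF : MeanSquareLE σ₁ σ₂ F η)
    (hFc : ContinuousOn F (re ⁻¹' Set.Icc σ₁ σ₂)) (hη : 0 ≤ η) {c : ℝ} (hc : c ≠ 0) (Y : ℝ) :
    ∀ᶠ T : ℝ in atTop, ∀ s : ℂ, s.re ∈ Set.Icc σ₁ σ₂ → |s.im| ≤ Y →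
      ∫ t in (0 : ℝ)..T, ‖F (s + (c * t : ℝ) * I)‖ ^ 2 ≤ 2 * η * T := by
  have hc0 : 0 < |c| := abs_pos.2 hc
  have hlim : Tendsto (fun T => |c| * T + Y) atTop atTop :=
    tendsto_atTop_add_const_right _ _ (tendsto_id.const_mul_atTop hc0)
  filter_upwards [hlim.eventually hF, eventually_ge_atTop 0, eventually_ge_atTop (Y / |c|)]
    with T hFT hT hTY s hs hsY
  rw [div_le_iff₀ hc0] at hTY
  have hline (t : ℝ) : s + (c * t : ℝ) * I = s.re + (s.im + c * t : ℝ) * I :=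
    add_mul_I_eq_re_add_mul_I s _
  simp only [hline]
  have hcont : Continuous fun u : ℝ => ‖F (s.re + u * I)‖ ^ 2 :=
    (continuous_vertical_of_continuousOn hFc hs).norm.pow 2
  calc _ ≤ |c|⁻¹ * (η * (|c| * T + Y)) :=
        (integral_comp_add_mul_le hcont (fun _ => by positivity) hc hsY hT).trans
          (by gcongr; exact hFT s.re hs)
    _ ≤ |c|⁻¹ * (η * (|c| * T + T * |c|)) := by gcongr
    _ = 2 * η * T := by field_simp; ring

lemma IsRough.le {r : ℕ} (hr : IsRough n r) (h0 : r ≠ 0) (h1 : r ≠ 1) : n ≤ r := by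
  obtain ⟨j, hj⟩ := exists_nthPrime_eq (Nat.minFac_prime h1)
  calc n ≤ j := not_lt.1 fun hjn => hr j hjn (hj ▸ Nat.minFac_dvd r)
    _ ≤ nthPrime j := strictMono_nthPrime.le_apply
    _ ≤ r := hj ▸ Nat.minFac_le h0.bot_lt

lemma integral_norm_sq_mul_add_le {S F G : ℝ → ℂ} {T D : ℝ} (hT : 0 ≤ T) (hS : Continuous S)
    (hF : Continuous F) (hG : Continuous G) (hD : ∀ t, ‖S t‖ ≤ D) :
    ∫ t in (0 : ℝ)..T, ‖S t‖ ^ 2 * ‖F t + G t‖ ^ 2 ≤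
      2 * (D ^ 2 * ∫ t in (0 : ℝ)..T, ‖F t‖ ^ 2) +
        2 * ∫ t in (0 : ℝ)..T, ‖S t‖ ^ 2 * ‖G t‖ ^ 2 := by
  have hsplit := integral_norm_sub_sq_le hT (hS.mul hF) (hS.mul hG).neg
  have hSF := integral_norm_mul_sq_le hT hS hF fun t _ => pow_le_pow_left₀ (norm_nonneg _) (hD t) 2
  simp only [Pi.mul_apply, Pi.neg_apply, sub_neg_eq_add, ← mul_add, norm_neg, norm_mul, mul_pow]
    at hsplit hSF
  linarith

lemma exists_eventually_integral_fejerProd_mul_zetaTail_le (h1 : 1 / 2 < σ₁) (h2 : σ₂ < 1) (Y : ℝ)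
    {c : ℤ} (hc : c ≠ 0) (hκ : 0 < κ) :
    ∃ n₀ : ℕ, ∀ n ≥ n₀, ∀ (L : Fin n → ℕ) (θ : Fin n → ℂ), (∀ k, L k ≠ 0) → (∀ k, ‖θ k‖ = 1) →
      ∀ᶠ T : ℝ in atTop, ∀ s : ℂ, s.re ∈ Set.Icc σ₁ σ₂ → |s.im| ≤ Y →
        ∫ t in (0 : ℝ)..T, ‖fejerProd L θ t‖ ^ 2 * ‖zetaTail n (s + (c * t : ℝ) * I)‖ ^ 2 ≤
          κ * (∏ k, (L k : ℝ)) * T := by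
  obtain ⟨M₀, hM₀⟩ := exists_forall_sum_rpow_le h1 (by positivity : 0 < κ / 4 / 2)
  refine ⟨M₀ + 1, fun n hn L θ hL hθ => ?_⟩
  set D : ℝ := ∏ k, (L k : ℝ)
  have hD : 1 ≤ D := one_le_prod_natCast hL
  obtain ⟨M₁, hM₁⟩ := exists_meanSquareLE_riemannZeta_mul_eulerFactors_sub_roughSum h1 h2 n
    (by positivity : 0 < κ / (8 * D))
  set M := M₁ + 1
  have hsum : ∑ r ∈ (roughUpTo n M).erase 1, (r : ℝ) ^ (-2 * σ₁) ≤ κ / 4 / 2 := hM₀ _ fun r hr => by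
    obtain ⟨hr1, hr⟩ := Finset.mem_erase.1 hr
    exact (Nat.lt_of_succ_le hn).trans_le
      ((mem_roughUpTo.1 hr).2.le (ne_of_mem_of_not_mem hr zero_notMem_roughUpTo) hr1)
  have hcont := continuousOn_riemannZeta_mul_eulerFactors_sub_roughSum σ₁ h2 n M
  filter_upwards [(hM₁ M (Nat.le_succ _)).eventually_integral_add_mul_le hcont (by positivity)
      (by exact_mod_cast hc : (c : ℝ) ≠ 0) Y,
    eventually_integral_norm_sq_fejerProd_mul_roughSum_sub_one_le hL hθ hc (Nat.le_add_left 1 M₁)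
      (by linarith) (by positivity) hsum, eventually_ge_atTop 0] with T hF hR hT s hs hsY
  have hline : Continuous fun t : ℝ => s + (c * t : ℝ) * I := by fun_prop
  have hF' := hcont.comp_continuous hline fun t => by simpa using hs
  have hR' := ((continuous_sum_natCast_cpow_neg (zero_notMem_roughUpTo (n := n) (M := M))).comp
    hline).sub (continuous_const : Continuous fun _ => (1 : ℂ))
  calc _ = ∫ t in (0 : ℝ)..T, ‖fejerProd L θ t‖ ^ 2 *
          ‖(riemannZeta (s + (c * t : ℝ) * I) * eulerFactors n (s + (c * t : ℝ) * I) -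
            roughSum n M (s + (c * t : ℝ) * I)) +
            (roughSum n M (s + (c * t : ℝ) * I) - 1)‖ ^ 2 := by
        simp only [zetaTail, sub_add_sub_cancel]
    _ ≤ 2 * (D ^ 2 * (2 * (κ / (8 * D)) * T)) + 2 * (κ / 4 * D * T) := by
        refine (integral_norm_sq_mul_add_le hT (continuous_fejerProd L θ) hF' hR'
          (norm_fejerProd_le L hθ)).trans ?_
        gcongr
        · exact hF s hs hsY
        · exact hR s hs.1
    _ = κ * D * T := by field_simp; ring

end Tail

/-! ### Bounded twisted Euler products -/

lemma norm_inv_one_sub_le_exp {z : ℂ} (hz : ‖z‖ ≤ 3 / 4) :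
    ‖(1 - z)⁻¹‖ ≤ Real.exp (z.re + 2 * ‖z‖ ^ 2) := by
  have hne : (1 - z)⁻¹ ≠ 0 := inv_ne_zero (sub_ne_zero.2 fun h => by norm_num [← h] at hz)
  have hlog : (log (1 - z)⁻¹ - z).re ≤ ‖z‖ ^ 2 * (1 - ‖z‖)⁻¹ / 2 :=
    (re_le_norm _).trans (norm_log_one_sub_inv_sub_self_le (by linarith))
  have hinv : (1 - ‖z‖)⁻¹ ≤ 4 := inv_le_of_inv_le₀ (by norm_num) (by linarith)
  have hsq : ‖z‖ ^ 2 * (1 - ‖z‖)⁻¹ / 2 ≤ ‖z‖ ^ 2 * 4 / 2 := by gcongr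
  rw [← exp_log hne, norm_exp, Real.exp_le_exp]
  rw [sub_re] at hlog
  linarith

lemma norm_cexp_neg_mul_sub_le {s : ℂ} (hs : 0 < s.re) {u v : ℝ} (huv : u ≤ v) :
    ‖cexp (-(s * v)) - cexp (-(s * u))‖ ≤
      ‖s‖ / s.re * (Real.exp (-(s.re * u)) - Real.exp (-(s.re * v))) := by
  have hf (x : ℝ) : HasDerivAt (fun x : ℝ => cexp (-(s * x)) - cexp (-(s * u)))
      (cexp (-(s * x)) * (-(s * 1))) x :=
    ((ofRealCLM.hasDerivAt (x := x)).const_mul s).neg.cexp.sub_const _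
  have hB (x : ℝ) : HasDerivAt
      (fun x : ℝ => ‖s‖ / s.re * (Real.exp (-(s.re * u)) - Real.exp (-(s.re * x))))
      (‖s‖ * Real.exp (-(s.re * x))) x := by
    refine ((((hasDerivAt_id' x).const_mul s.re).neg.exp.const_sub
      (Real.exp (-(s.re * u)))).const_mul (‖s‖ / s.re)).congr_deriv ?_
    field_simp
    rfl
  refine image_norm_le_of_norm_deriv_right_le_deriv_boundary
    (fun x _ => (hf x).continuousAt.continuousWithinAt) (fun x _ => (hf x).hasDerivWithinAt)
    (by simp) hB (fun x _ => ?_) ⟨huv, le_rfl⟩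
  simp [norm_exp, mul_comm]

lemma sum_range_pow_mul_eq {K : Type*} [Field K] {ρ : K} (hρ1 : ρ ≠ 1) (x : ℕ → K) (n : ℕ) :
    ∑ k ∈ Finset.range n, ρ ^ k * x k = (ρ ^ n - 1) / (ρ - 1) * x n +
      ∑ k ∈ Finset.range n, (ρ ^ (k + 1) - 1) / (ρ - 1) * (x k - x (k + 1)) := by
  have hne : ρ - 1 ≠ 0 := sub_ne_zero.2 hρ1
  induction n with
  | zero => simp
  | succ n ih =>
    rw [Finset.sum_range_succ, ih, Finset.sum_range_succ]
    field_simp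
    ring

lemma norm_sum_range_pow_mul_le {ρ : ℂ} (hρ : ‖ρ‖ = 1) (hρ1 : ρ ≠ 1) (x : ℕ → ℂ) (n : ℕ) :
    ‖∑ k ∈ Finset.range n, ρ ^ k * x k‖ ≤
      2 / ‖ρ - 1‖ * (‖x n‖ + ∑ k ∈ Finset.range n, ‖x k - x (k + 1)‖) := by
  have hgeom (k : ℕ) : ‖(ρ ^ k - 1) / (ρ - 1)‖ ≤ 2 / ‖ρ - 1‖ := by
    rw [norm_div]
    gcongr
    exact (norm_sub_le _ _).trans (by norm_num [hρ])
  rw [sum_range_pow_mul_eq hρ1, mul_add, Finset.mul_sum]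
  refine (norm_add_le _ _).trans
    (add_le_add ?_ ((norm_sum_le _ _).trans (Finset.sum_le_sum fun k _ => ?_)))
  all_goals
    rw [norm_mul]
    gcongr
    exact hgeom _

lemma natCast_cpow_neg_eq_cexp {r : ℕ} (hr : r ≠ 0) (s : ℂ) :
    (r : ℂ) ^ (-s) = cexp (-(s * (Real.log r : ℝ))) := by
  rw [cpow_def_of_ne_zero (by exact_mod_cast hr), natCast_log, mul_neg, mul_comm]

lemma sum_norm_natCast_cpow_neg_sub_le {p : ℕ → ℕ} (hp : Monotone p) (h0 : p 0 ≠ 0) {s : ℂ}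
    (hs : 0 < s.re) (n : ℕ) :
    ∑ k ∈ Finset.range n, ‖(p k : ℂ) ^ (-s) - (p (k + 1) : ℂ) ^ (-s)‖ ≤ ‖s‖ / s.re := by
  have hp0 (k : ℕ) : p k ≠ 0 := (h0.bot_lt.trans_le (hp k.zero_le)).ne'
  have hlog : 0 ≤ s.re * Real.log (p 0) := mul_nonneg hs.le (Real.log_natCast_nonneg _)
  calc _ ≤ ∑ k ∈ Finset.range n, ‖s‖ / s.re *
          (Real.exp (-(s.re * Real.log (p k))) - Real.exp (-(s.re * Real.log (p (k + 1))))) := by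
        refine Finset.sum_le_sum fun k _ => ?_
        rw [natCast_cpow_neg_eq_cexp (hp0 k), natCast_cpow_neg_eq_cexp (hp0 _), norm_sub_rev]
        exact norm_cexp_neg_mul_sub_le hs (Real.log_le_log (by exact_mod_cast (hp0 k).bot_lt)
          (by exact_mod_cast hp k.le_succ))
    _ = ‖s‖ / s.re *
          (Real.exp (-(s.re * Real.log (p 0))) - Real.exp (-(s.re * Real.log (p n)))) := by
        rw [← Finset.mul_sum, Finset.sum_range_sub' fun k => Real.exp (-(s.re * Real.log (p k)))]
    _ ≤ ‖s‖ / s.re * 1 := by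
        gcongr
        linarith [Real.exp_pos (-(s.re * Real.log (p n))),
          Real.exp_le_one_iff.2 (neg_nonpos.2 hlog)]
    _ = ‖s‖ / s.re := mul_one _

lemma norm_natCast_cpow_neg_le {r : ℕ} (hr : 2 ≤ r) {s : ℂ} (hs : 1 / 2 ≤ s.re) :
    ‖(r : ℂ) ^ (-s)‖ ≤ 3 / 4 := by
  have hr' : (2 : ℝ) ≤ r := by exact_mod_cast hr
  refine le_of_sq_le_sq ?_ (by norm_num)
  calc ‖(r : ℂ) ^ (-s)‖ ^ 2 = (r : ℝ) ^ (-2 * s.re) := norm_sq_natCast_cpow_neg (by omega) s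
    _ ≤ (r : ℝ) ^ (-1 : ℝ) := Real.rpow_le_rpow_of_exponent_le (by linarith) (by linarith)
    _ ≤ 2⁻¹ := by rw [Real.rpow_neg_one]; gcongr
    _ ≤ (3 / 4) ^ 2 := by norm_num

/-- The Euler product over the first `n` primes, with coefficient `x k` at the `k`-th prime. -/
noncomputable def twistedEulerProd (n : ℕ) (x : ℕ → ℂ) (s : ℂ) : ℂ :=
  ∏ k ∈ Finset.range n, (1 - x k * (nthPrime k : ℂ) ^ (-s))⁻¹

section Twisted

variable {x : ℕ → ℂ} {s ρ : ℂ}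

lemma one_sub_mul_nthPrime_cpow_ne_zero {z : ℂ} (hz : ‖z‖ = 1) (k : ℕ) (hs : 1 / 2 ≤ s.re) :
    1 - z * (nthPrime k : ℂ) ^ (-s) ≠ 0 := fun h => by
  have hle := norm_natCast_cpow_neg_le (prime_nthPrime k).two_le hs
  have h1 := congrArg norm (sub_eq_zero.1 h)
  rw [norm_one, norm_mul, hz, one_mul] at h1
  linarith

lemma nthPrime_cpow_neg_add_mul_I (k : ℕ) (s : ℂ) (c : ℤ) (t : ℝ) :
    (nthPrime k : ℂ) ^ (-(s + (c * t : ℝ) * I)) =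
      nthPrimePhase k t ^ c * (nthPrime k : ℂ) ^ (-s) := by
  rw [natCast_cpow_neg_add_mul_I (prime_nthPrime k).ne_zero, nthPrimePhase, ← exp_int_mul, mul_comm]
  congr 2
  push_cast; ring

lemma inv_eulerFactors_add_mul_I (n : ℕ) (s : ℂ) (c : ℤ) (t : ℝ) :
    (eulerFactors n (s + (c * t : ℝ) * I))⁻¹ =
      twistedEulerProd n (fun k => nthPrimePhase k t ^ c) s := by
  simp only [eulerFactors, twistedEulerProd, nthPrime_cpow_neg_add_mul_I,
    Finset.prod_inv_distrib]

lemma twistedEulerProd_ne_zero (hx : ∀ k, ‖x k‖ = 1) (n : ℕ) (hs : 1 / 2 ≤ s.re) :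
    twistedEulerProd n x s ≠ 0 :=
  Finset.prod_ne_zero_iff.2 fun k _ =>
    inv_ne_zero (one_sub_mul_nthPrime_cpow_ne_zero (hx k) k hs)

lemma norm_twistedEulerProd_le (hx : ∀ k, ‖x k‖ = 1) (n : ℕ) (hs : 1 / 2 ≤ s.re) :
    ‖twistedEulerProd n x s‖ ≤
      Real.exp (‖∑ k ∈ Finset.range n, x k * (nthPrime k : ℂ) ^ (-s)‖ +
        2 * ∑ k ∈ Finset.range n, (nthPrime k : ℝ) ^ (-2 * s.re)) := by
  have hnorm (k : ℕ) : ‖x k * (nthPrime k : ℂ) ^ (-s)‖ = ‖(nthPrime k : ℂ) ^ (-s)‖ := by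
    rw [norm_mul, hx, one_mul]
  have hsq (k : ℕ) : ‖x k * (nthPrime k : ℂ) ^ (-s)‖ ^ 2 = (nthPrime k : ℝ) ^ (-2 * s.re) := by
    rw [hnorm, norm_sq_natCast_cpow_neg (prime_nthPrime k).ne_zero]
  calc _ ≤ ∏ k ∈ Finset.range n, Real.exp ((x k * (nthPrime k : ℂ) ^ (-s)).re +
          2 * (nthPrime k : ℝ) ^ (-2 * s.re)) := by
        rw [twistedEulerProd, norm_prod]
        refine Finset.prod_le_prod (fun _ _ => norm_nonneg _) fun k _ => ?_
        rw [← hsq]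
        exact norm_inv_one_sub_le_exp
          ((hnorm k).trans_le (norm_natCast_cpow_neg_le (prime_nthPrime k).two_le hs))
    _ = Real.exp ((∑ k ∈ Finset.range n, x k * (nthPrime k : ℂ) ^ (-s)).re +
          2 * ∑ k ∈ Finset.range n, (nthPrime k : ℝ) ^ (-2 * s.re)) := by
        rw [← Real.exp_sum, Finset.sum_add_distrib, re_sum, Finset.mul_sum]
    _ ≤ _ := by
        gcongr
        exact re_le_norm _

lemma norm_sum_pow_mul_nthPrime_cpow_le (hρ : ‖ρ‖ = 1) (hρ1 : ρ ≠ 1) (n : ℕ) (hs : 0 < s.re) :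
    ‖∑ k ∈ Finset.range n, ρ ^ k * (nthPrime k : ℂ) ^ (-s)‖ ≤
      2 / ‖ρ - 1‖ * (1 + ‖s‖ / s.re) := by
  refine (norm_sum_range_pow_mul_le hρ hρ1 _ n).trans ?_
  gcongr
  · exact norm_natCast_cpow_neg_le_one (prime_nthPrime n).ne_zero hs.le
  · exact sum_norm_natCast_cpow_neg_sub_le strictMono_nthPrime.monotone (prime_nthPrime 0).ne_zero
      hs n

lemma exists_forall_norm_twistedEulerProd_pow_le (hρ : ‖ρ‖ = 1) (hρ1 : ρ ≠ 1) {σ₁ : ℝ}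
    (h1 : 1 / 2 < σ₁) (R : ℝ) :
    ∃ B : ℝ, ∀ (n : ℕ) (s : ℂ), σ₁ ≤ s.re → ‖s‖ ≤ R → ‖twistedEulerProd n (ρ ^ ·) s‖ ≤ B := by
  have hsum : Summable fun k => (nthPrime k : ℝ) ^ (-2 * σ₁) :=
    (Real.summable_nat_rpow.2 (by linarith)).comp_injective strictMono_nthPrime.injective
  refine ⟨Real.exp (2 / ‖ρ - 1‖ * (1 + R / σ₁) + 2 * ∑' k, (nthPrime k : ℝ) ^ (-2 * σ₁)),
    fun n s hs hR => ?_⟩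
  have hpow (k : ℕ) : ‖ρ ^ k‖ = 1 := by rw [norm_pow, hρ, one_pow]
  refine (norm_twistedEulerProd_le hpow n (by linarith)).trans ?_
  gcongr
  · have hR0 : 0 ≤ R := (norm_nonneg s).trans hR
    refine (norm_sum_pow_mul_nthPrime_cpow_le hρ hρ1 n (by linarith)).trans ?_
    gcongr
  · refine (Finset.sum_le_sum fun k _ => ?_).trans (hsum.sum_le_tsum _ fun k _ => by positivity)
    exact Real.rpow_le_rpow_of_exponent_le (by exact_mod_cast (prime_nthPrime k).one_le)
      (by linarith)

end Twisted

/-! ### From mean values to uniform bounds -/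

section MeanValue

variable {f : ℂ → ℂ} {z : ℂ} {r : ℝ}

lemma two_pi_mul_enorm_le_lintegral_circleMap (hr : 0 ≤ r)
    (hf : DifferentiableOn ℂ f (Metric.closedBall z r)) :
    ENNReal.ofReal (2 * Real.pi) * ‖f z‖ₑ ≤
      ∫⁻ θ in Set.Ioo (-Real.pi) Real.pi, ‖f (circleMap z r θ)‖ₑ := by
  have hmean : Real.circleAverage f z r = f z :=
    DiffContOnCl.circleAverage (by rw [abs_of_nonneg hr]; exact hf.diffContOnCl_ball subset_rfl)
  have hint : ∫ θ in (-Real.pi)..Real.pi, f (circleMap z r θ) = (2 * Real.pi : ℝ) • f z := by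
    rw [← hmean, Real.circleAverage_eq_integral_add (-Real.pi),
      intervalIntegral.integral_comp_add_right fun θ => f (circleMap z r θ),
      smul_inv_smul₀ (by positivity)]
    ring_nf
  calc _ = ‖∫ θ in (-Real.pi)..Real.pi, f (circleMap z r θ)‖ₑ := by
        rw [hint, enorm_smul, Real.enorm_eq_ofReal (by positivity)]
    _ ≤ _ := by
        rw [intervalIntegral.integral_of_le (by linarith [Real.pi_pos]),
          integral_Ioc_eq_integral_Ioo]
        exact enorm_integral_le_lintegral_enorm _

lemma lintegral_ofReal_Ioc (hr : 0 ≤ r) :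
    ∫⁻ ρ in Set.Ioc 0 r, ENNReal.ofReal ρ = ENNReal.ofReal (r ^ 2 / 2) := by
  rw [← ofReal_integral_eq_lintegral_ofReal, ← intervalIntegral.integral_of_le hr, integral_id]
  · simp
  · exact continuous_id.integrableOn_Ioc
  · exact (ae_restrict_mem measurableSet_Ioc).mono fun ρ hρ => hρ.1.le

lemma lintegral_eq_lintegral_circleMap {F : ℂ → ℝ≥0∞} (hF : Measurable F) (z : ℂ) :
    ∫⁻ w, F w = ∫⁻ ρ in Set.Ioi (0 : ℝ), ENNReal.ofReal ρ *
      ∫⁻ θ in Set.Ioo (-Real.pi) Real.pi, F (circleMap z ρ θ) := by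
  have hpolar (p : ℝ × ℝ) : z + Complex.polarCoord.symm p = circleMap z p.1 p.2 := by
    rw [Complex.polarCoord_symm_apply, circleMap, exp_mul_I, ofReal_cos, ofReal_sin]
  rw [← lintegral_add_left_eq_self F z, ← Complex.lintegral_comp_polarCoord_symm]
  simp only [hpolar, smul_eq_mul]
  rw [polarCoord_target, Measure.volume_eq_prod, ← Measure.prod_restrict,
    lintegral_prod _ (by unfold circleMap; fun_prop)]
  simp only [lintegral_const_mul' _ _ ENNReal.ofReal_ne_top]

lemma pi_mul_sq_mul_enorm_le_lintegral_closedBall (hr : 0 ≤ r) (hfm : Measurable f)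
    (hf : DifferentiableOn ℂ f (Metric.closedBall z r)) :
    ENNReal.ofReal (Real.pi * r ^ 2) * ‖f z‖ₑ ≤ ∫⁻ w in Metric.closedBall z r, ‖f w‖ₑ := by
  set F : ℂ → ℝ≥0∞ := (Metric.closedBall z r).indicator fun w => ‖f w‖ₑ
  have hF : Measurable F := hfm.enorm.indicator Metric.isClosed_closedBall.measurableSet
  have hcircle (ρ : ℝ) (hρ : ρ ∈ Set.Ioc 0 r) : ENNReal.ofReal (2 * Real.pi) * ‖f z‖ₑ ≤
      ∫⁻ θ in Set.Ioo (-Real.pi) Real.pi, F (circleMap z ρ θ) := by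
    have hsub : Metric.closedBall z ρ ⊆ Metric.closedBall z r :=
      Metric.closedBall_subset_closedBall hρ.2
    refine (two_pi_mul_enorm_le_lintegral_circleMap hρ.1.le (hf.mono hsub)).trans_eq ?_
    exact lintegral_congr fun θ => (Set.indicator_of_mem
      (hsub (circleMap_mem_closedBall z hρ.1.le θ)) fun w => ‖f w‖ₑ).symm
  calc _ = ∫⁻ ρ in Set.Ioc 0 r, ENNReal.ofReal ρ * (ENNReal.ofReal (2 * Real.pi) * ‖f z‖ₑ) := by
        rw [lintegral_mul_const _ ENNReal.measurable_ofReal, lintegral_ofReal_Ioc hr, ← mul_assoc,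
          ← ENNReal.ofReal_mul (by positivity)]
        ring_nf
    _ ≤ ∫⁻ ρ in Set.Ioc 0 r, ENNReal.ofReal ρ *
          ∫⁻ θ in Set.Ioo (-Real.pi) Real.pi, F (circleMap z ρ θ) :=
        setLIntegral_mono' measurableSet_Ioc fun ρ hρ => by gcongr; exact hcircle ρ hρ
    _ ≤ ∫⁻ ρ in Set.Ioi 0, ENNReal.ofReal ρ *
          ∫⁻ θ in Set.Ioo (-Real.pi) Real.pi, F (circleMap z ρ θ) :=
        lintegral_mono_set Set.Ioc_subset_Ioi_self
    _ = ∫⁻ w in Metric.closedBall z r, ‖f w‖ₑ := by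
        rw [← lintegral_eq_lintegral_circleMap hF,
          lintegral_indicator Metric.isClosed_closedBall.measurableSet]

lemma exists_forall_enorm_le_lintegral {U K : Set ℂ} (hU : IsOpen U) (hK : IsCompact K)
    (hKU : K ⊆ U) :
    ∃ K' ⊆ U, IsCompact K' ∧ ∃ C : ℝ≥0∞, C ≠ ∞ ∧ ∀ f : ℂ → ℂ, Measurable f →
      DifferentiableOn ℂ f U → ∀ z ∈ K, ‖f z‖ₑ ≤ C * ∫⁻ w in K', ‖f w‖ₑ := by
  obtain ⟨r, hr, hrU⟩ := hK.exists_cthickening_subset_open hU hKU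
  have hA : ENNReal.ofReal (Real.pi * r ^ 2) ≠ 0 := by
    rw [ENNReal.ofReal_ne_zero_iff]; positivity
  refine ⟨Metric.cthickening r K, hrU, hK.cthickening, (ENNReal.ofReal (Real.pi * r ^ 2))⁻¹,
    ENNReal.inv_ne_top.2 hA, fun f hfm hf z hz => ?_⟩
  have hball : Metric.closedBall z r ⊆ Metric.cthickening r K :=
    Metric.closedBall_subset_cthickening hz r
  rw [← ENNReal.mul_le_iff_le_inv hA ENNReal.ofReal_ne_top]
  exact (pi_mul_sq_mul_enorm_le_lintegral_closedBall hr.le hfm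
    (hf.mono (hball.trans hrU))).trans (lintegral_mono_set hball)

end MeanValue

/-! ### The weighted measure -/

/-- The measure on `ℝ` with density the Fejér-type weight `|fejerProd L θ|²`. -/
noncomputable def fejerMeasure {n : ℕ} (L : Fin n → ℕ) (θ : Fin n → ℂ) : Measure ℝ :=
  volume.withDensity fun t => ‖fejerProd L θ t‖ₑ ^ 2

section FejerMeasure

variable {n : ℕ} {L : Fin n → ℕ} {θ : Fin n → ℂ} {κ δ : ℝ}

instance fejerMeasure.instSFinite (L : Fin n → ℕ) (θ : Fin n → ℂ) : SFinite (fejerMeasure L θ) := by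
  unfold fejerMeasure; infer_instance

lemma fejerMeasure_le (hθ : ∀ k, ‖θ k‖ = 1) (S : Set ℝ) :
    fejerMeasure L θ S ≤ ENNReal.ofReal ((∏ k, (L k : ℝ)) ^ 2) * volume S := by
  have hle : fejerMeasure L θ ≤
      volume.withDensity fun _ => ENNReal.ofReal ((∏ k, (L k : ℝ)) ^ 2) :=
    withDensity_mono <| .of_forall fun t => by
      change ‖fejerProd L θ t‖ₑ ^ 2 ≤ _
      rw [← ofReal_norm, ← ENNReal.ofReal_pow (norm_nonneg _)]
      exact ENNReal.ofReal_le_ofReal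
        (pow_le_pow_left₀ (norm_nonneg _) (norm_fejerProd_le L hθ t) 2)
  refine (hle S).trans_eq ?_
  rw [withDensity_const, Measure.smul_apply, smul_eq_mul]

lemma lintegral_enorm_sq_fejerMeasure (L : Fin n → ℕ) (θ : Fin n → ℂ) {g : ℝ → ℂ}
    (hg : Continuous g) {T : ℝ} (hT : 0 ≤ T) :
    ∫⁻ t in Set.Icc 0 T, ‖g t‖ₑ ^ 2 ∂fejerMeasure L θ =
      ENNReal.ofReal (∫ t in (0 : ℝ)..T, ‖fejerProd L θ t‖ ^ 2 * ‖g t‖ ^ 2) := by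
  have hS := continuous_fejerProd L θ
  have hcont : Continuous fun t => ‖fejerProd L θ t‖ ^ 2 * ‖g t‖ ^ 2 :=
    (hS.norm.pow 2).mul (hg.norm.pow 2)
  rw [fejerMeasure, setLIntegral_withDensity_eq_setLIntegral_mul _ (by fun_prop) (by fun_prop)
    measurableSet_Icc, intervalIntegral.integral_of_le hT, ← integral_Icc_eq_integral_Ioc,
    ofReal_integral_eq_lintegral_ofReal hcont.integrableOn_Icc (.of_forall fun t => by positivity)]
  refine lintegral_congr fun t => ?_
  rw [Pi.mul_apply, ENNReal.ofReal_mul (by positivity), ENNReal.ofReal_pow (norm_nonneg _),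
    ENNReal.ofReal_pow (norm_nonneg _), ofReal_norm, ofReal_norm]

lemma eventually_le_fejerMeasure_Icc (hL : ∀ k, L k ≠ 0) (hθ : ∀ k, ‖θ k‖ = 1) :
    ∀ᶠ T : ℝ in atTop,
      ENNReal.ofReal ((∏ k, (L k : ℝ)) / 2 * T) ≤ fejerMeasure L θ (Set.Icc 0 T) := by
  filter_upwards [eventually_le_integral_norm_sq_fejerProd hL hθ, eventually_ge_atTop 0]
    with T hT hT0
  have hone := lintegral_enorm_sq_fejerMeasure L θ (continuous_const (y := (1 : ℂ))) hT0
  simp only [enorm_one, norm_one, one_pow, mul_one, setLIntegral_one] at hone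
  exact hone ▸ ENNReal.ofReal_le_ofReal hT

lemma eventually_fejerMeasure_le_norm_sub_one_le (hL : ∀ k, L k ≠ 0) (hθ : ∀ k, ‖θ k‖ = 1)
    (k : Fin n) (hδ : 0 < δ) :
    ∀ᶠ T : ℝ in atTop,
      fejerMeasure L θ ({t | δ ≤ ‖θ k * nthPrimePhase k t - 1‖} ∩ Set.Icc 0 T) ≤
        ENNReal.ofReal (5 / L k * (∏ j, (L j : ℝ)) * T / δ ^ 2) := by
  filter_upwards [eventually_integral_norm_sq_fejerProd_mul_sub_one_le hL hθ k,
    eventually_ge_atTop 0] with T hT hT0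
  have hcont : Continuous fun t => θ k * nthPrimePhase k t - 1 :=
    (continuous_const.mul (continuous_nthPrimePhase k)).sub continuous_const
  have hsub : {t | δ ≤ ‖θ k * nthPrimePhase k t - 1‖} ⊆
      {t | ENNReal.ofReal (δ ^ 2) ≤ ‖θ k * nthPrimePhase k t - 1‖ₑ ^ 2} := fun t ht => by
    rw [Set.mem_ofPred_eq, ← ofReal_norm, ← ENNReal.ofReal_pow (norm_nonneg _)]
    exact ENNReal.ofReal_le_ofReal (pow_le_pow_left₀ hδ.le ht 2)
  rw [ENNReal.ofReal_div_of_pos (by positivity), ENNReal.le_div_iff_mul_le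
    (.inl (by simpa using hδ.ne')) (.inl ENNReal.ofReal_ne_top), mul_comm]
  calc _ ≤ ENNReal.ofReal (δ ^ 2) * (fejerMeasure L θ).restrict (Set.Icc 0 T)
          {t | ENNReal.ofReal (δ ^ 2) ≤ ‖θ k * nthPrimePhase k t - 1‖ₑ ^ 2} := by
        rw [Measure.restrict_apply' measurableSet_Icc]
        gcongr
    _ ≤ ∫⁻ t in Set.Icc 0 T, ‖θ k * nthPrimePhase k t - 1‖ₑ ^ 2 ∂fejerMeasure L θ :=
        mul_meas_ge_le_lintegral (by fun_prop) _
    _ ≤ _ := by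
        rw [lintegral_enorm_sq_fejerMeasure L θ hcont hT0]
        exact ENNReal.ofReal_le_ofReal hT

lemma exists_eventually_fejerMeasure_exists_le_norm_sub_one_le (hθ : ∀ k, ‖θ k‖ = 1) (hδ : 0 < δ)
    (hκ : 0 < κ) :
    ∃ L : Fin n → ℕ, (∀ k, L k ≠ 0) ∧ ∀ᶠ T : ℝ in atTop,
      fejerMeasure L θ ({t | ∃ k, δ ≤ ‖θ k * nthPrimePhase k t - 1‖} ∩ Set.Icc 0 T) ≤
        ENNReal.ofReal (κ * (∏ k, (L k : ℝ)) * T) := by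
  obtain ⟨N, hN⟩ := exists_nat_ge (5 * n / (κ * δ ^ 2))
  have hN0 (_ : Fin n) : N + 1 ≠ 0 := N.succ_ne_zero
  refine ⟨fun _ => N + 1, hN0, ?_⟩
  filter_upwards [eventually_all.2
    fun k => eventually_fejerMeasure_le_norm_sub_one_le hN0 hθ k hδ, eventually_ge_atTop 0]
    with T hT hT0
  rw [Set.ofPred_exists, Set.iUnion_inter]
  refine (measure_iUnion_fintype_le _ _).trans ((Finset.sum_le_sum fun k _ => hT k).trans ?_)
  rw [Finset.sum_const, Finset.card_univ, Fintype.card_fin, nsmul_eq_mul,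
    ← ENNReal.ofReal_natCast, ← ENNReal.ofReal_mul (by positivity)]
  refine ENNReal.ofReal_le_ofReal ?_
  set D : ℝ := ∏ _k : Fin n, ((N + 1 : ℕ) : ℝ)
  have hsmall : 5 * n / (((N + 1 : ℕ) : ℝ) * δ ^ 2) ≤ κ := by
    rw [div_le_iff₀ (by positivity)] at hN ⊢
    push_cast
    nlinarith [mul_pos hκ (pow_pos hδ 2)]
  calc _ = 5 * n / (((N + 1 : ℕ) : ℝ) * δ ^ 2) * (D * T) := by field_simp
    _ ≤ κ * (D * T) := by gcongr
    _ = κ * D * T := (mul_assoc _ _ _).symm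

end FejerMeasure

/-! ### The tail of the Euler product, uniformly on compact sets -/

section UniformTail

variable {n : ℕ} {L : Fin n → ℕ} {θ : Fin n → ℂ} {κ η : ℝ} {K : Set ℂ}

lemma isOpen_strip : IsOpen strip :=
  (isOpen_lt continuous_const continuous_re).inter (isOpen_lt continuous_re continuous_const)

lemma exists_forall_mem_re_im_of_isCompact (hK : IsCompact K) (hKD : K ⊆ strip) :
    ∃ σ₁ σ₂ Y : ℝ, 1 / 2 < σ₁ ∧ σ₂ < 1 ∧ ∀ s ∈ K, s.re ∈ Set.Icc σ₁ σ₂ ∧ |s.im| ≤ Y := by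
  rcases K.eq_empty_or_nonempty with rfl | hne
  · exact ⟨1, 0, 0, by norm_num, by norm_num, by simp⟩
  obtain ⟨s₁, hs₁, hmin⟩ := hK.exists_isMinOn hne continuous_re.continuousOn
  obtain ⟨s₂, hs₂, hmax⟩ := hK.exists_isMaxOn hne continuous_re.continuousOn
  obtain ⟨s₃, -, him⟩ := hK.exists_isMaxOn hne continuous_im.abs.continuousOn
  exact ⟨s₁.re, s₂.re, |s₃.im|, (hKD hs₁).1, (hKD hs₂).2,
    fun s hs => ⟨⟨hmin hs, hmax hs⟩, him hs⟩⟩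

lemma measurable_zetaTail (n : ℕ) : Measurable (zetaTail n) := by
  have hzeta : Measurable riemannZeta := measurable_of_continuousOn_compl_singleton 1
    fun _ hs => (differentiableAt_riemannZeta hs).continuousAt.continuousWithinAt
  exact (hzeta.mul (continuous_eulerFactors n).measurable).sub_const 1

lemma differentiable_eulerFactors (n : ℕ) : Differentiable ℂ (eulerFactors n) :=
  Differentiable.fun_finsetProd fun k _ => (differentiable_const 1).sub <|
    differentiable_neg.const_cpow (.inl (by exact_mod_cast (prime_nthPrime k).ne_zero))

lemma differentiableAt_zetaTail (n : ℕ) {s : ℂ} (hs : s ≠ 1) :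
    DifferentiableAt ℂ (zetaTail n) s :=
  ((differentiableAt_riemannZeta hs).mul (differentiable_eulerFactors n s)).sub_const 1

lemma add_mul_I_ne_one_of_mem_strip {s : ℂ} (hs : s ∈ strip) (x : ℝ) : s + x * I ≠ 1 :=
  add_mul_I_eq_re_add_mul_I s x ▸ add_mul_I_ne_one hs.2.ne _

lemma differentiableOn_zetaTail_add_mul_I (n : ℕ) (x : ℝ) :
    DifferentiableOn ℂ (fun s => zetaTail n (s + x * I)) strip := fun s hs =>
  (DifferentiableAt.comp (f := fun s : ℂ => s + x * I) s
    (differentiableAt_zetaTail n (add_mul_I_ne_one_of_mem_strip hs x))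
    (by fun_prop)).differentiableWithinAt

lemma continuous_zetaTail_add_mul_I (n : ℕ) {s : ℂ} (hs : s ∈ strip) (c : ℤ) :
    Continuous fun t : ℝ => zetaTail n (s + (c * t : ℝ) * I) :=
  continuous_iff_continuousAt.2 fun t => ContinuousAt.comp
    (f := fun t : ℝ => s + (c * t : ℝ) * I)
    (differentiableAt_zetaTail n (add_mul_I_ne_one_of_mem_strip hs _)).continuousAt (by fun_prop)

lemma measurable_enorm_zetaTail_sq (n : ℕ) (c : ℤ) :
    Measurable fun p : ℝ × ℂ => ‖zetaTail n (p.2 + (c * p.1 : ℝ) * I)‖ₑ ^ 2 :=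
  ((measurable_zetaTail n).comp (by fun_prop)).enorm.pow_const 2

lemma exists_forall_enorm_zetaTail_sq_le (hK : IsCompact K) (hKD : K ⊆ strip) :
    ∃ K' ⊆ strip, IsCompact K' ∧ ∃ C : ℝ≥0∞, C ≠ ∞ ∧ ∀ (n : ℕ) (x : ℝ), ∀ s ∈ K,
      ‖zetaTail n (s + x * I)‖ₑ ^ 2 ≤ C * ∫⁻ w in K', ‖zetaTail n (w + x * I)‖ₑ ^ 2 := by
  obtain ⟨K', hK'D, hK', C, hC, hsup⟩ := exists_forall_enorm_le_lintegral isOpen_strip hK hKD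
  refine ⟨K', hK'D, hK', C, hC, fun n x s hs => ?_⟩
  simp_rw [← enorm_pow]
  exact hsup (fun s => zetaTail n (s + x * I) ^ 2)
    (((measurable_zetaTail n).comp (by fun_prop)).pow_const 2)
    ((differentiableOn_zetaTail_add_mul_I n x).pow 2) s hs

lemma exists_eventually_lintegral_zetaTail_le (hK : IsCompact K) (hKD : K ⊆ strip) {c : ℤ}
    (hc : c ≠ 0) (hκ : 0 < κ) :
    ∃ n₀ : ℕ, ∀ n ≥ n₀, ∀ (L : Fin n → ℕ) (θ : Fin n → ℂ), (∀ k, L k ≠ 0) → (∀ k, ‖θ k‖ = 1) →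
      ∀ᶠ T : ℝ in atTop,
        ∫⁻ t in Set.Icc 0 T, (∫⁻ s in K, ‖zetaTail n (s + (c * t : ℝ) * I)‖ₑ ^ 2)
            ∂fejerMeasure L θ ≤
          ENNReal.ofReal (κ * (∏ k, (L k : ℝ)) * T) * volume K := by
  obtain ⟨σ₁, σ₂, Y, h1, h2, hbd⟩ := exists_forall_mem_re_im_of_isCompact hK hKD
  obtain ⟨n₀, hn₀⟩ := exists_eventually_integral_fejerProd_mul_zetaTail_le h1 h2 Y hc hκ
  refine ⟨n₀, fun n hn L θ hL hθ => ?_⟩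
  filter_upwards [hn₀ n hn L θ hL hθ, eventually_ge_atTop 0] with T hT hT0
  rw [lintegral_lintegral_swap (measurable_enorm_zetaTail_sq n c).aemeasurable,
    ← setLIntegral_const]
  refine setLIntegral_mono' hK.measurableSet fun s hs => ?_
  rw [lintegral_enorm_sq_fejerMeasure L θ (continuous_zetaTail_add_mul_I n (hKD hs) c) hT0]
  exact ENNReal.ofReal_le_ofReal (hT s (hbd s hs).1 (hbd s hs).2)

lemma exists_forall_mul_measure_exists_le_norm_zetaTail_le (hK : IsCompact K) (hKD : K ⊆ strip)
    (c : ℤ) (hη : 0 ≤ η) :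
    ∃ K' ⊆ strip, IsCompact K' ∧ ∃ C : ℝ≥0∞, C ≠ ∞ ∧ ∀ (n : ℕ) (ν : Measure ℝ),
      ENNReal.ofReal (η ^ 2) * ν {t | ∃ s ∈ K, η ≤ ‖zetaTail n (s + (c * t : ℝ) * I)‖} ≤
        C * ∫⁻ t, (∫⁻ s in K', ‖zetaTail n (s + (c * t : ℝ) * I)‖ₑ ^ 2) ∂ν := by
  obtain ⟨K', hK'D, hK', C, hC, hsup⟩ := exists_forall_enorm_zetaTail_sq_le hK hKD
  refine ⟨K', hK'D, hK', C, hC, fun n ν => ?_⟩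
  have hmeas := (measurable_enorm_zetaTail_sq n c).lintegral_prod_right' (ν := volume.restrict K')
  have hsub : {t : ℝ | ∃ s ∈ K, η ≤ ‖zetaTail n (s + (c * t : ℝ) * I)‖} ⊆
      {t : ℝ | ENNReal.ofReal (η ^ 2) ≤
        C * ∫⁻ s in K', ‖zetaTail n (s + (c * t : ℝ) * I)‖ₑ ^ 2} := by
    rintro t ⟨s, hs, hst⟩
    refine le_trans ?_ (hsup n (c * t : ℝ) s hs)
    rw [← ofReal_norm, ← ENNReal.ofReal_pow (norm_nonneg _)]
    exact ENNReal.ofReal_le_ofReal (pow_le_pow_left₀ hη hst 2)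
  rw [← lintegral_const_mul _ hmeas]
  exact (mul_le_mul_right (measure_mono hsub) _).trans
    (mul_meas_ge_le_lintegral (hmeas.const_mul C) _)

lemma exists_eventually_fejerMeasure_exists_le_norm_zetaTail_le (hK : IsCompact K)
    (hKD : K ⊆ strip) {c : ℤ} (hc : c ≠ 0) (hη : 0 < η) (hκ : 0 < κ) :
    ∃ n₀ : ℕ, ∀ n ≥ n₀, ∀ (L : Fin n → ℕ) (θ : Fin n → ℂ), (∀ k, L k ≠ 0) → (∀ k, ‖θ k‖ = 1) →
      ∀ᶠ T : ℝ in atTop, fejerMeasure L θ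
          ({t | ∃ s ∈ K, η ≤ ‖zetaTail n (s + (c * t : ℝ) * I)‖} ∩ Set.Icc 0 T) ≤
        ENNReal.ofReal (κ * (∏ k, (L k : ℝ)) * T) := by
  obtain ⟨K', hK'D, hK', C, hC, hcheb⟩ :=
    exists_forall_mul_measure_exists_le_norm_zetaTail_le hK hKD c hη.le
  set V := (C * volume K').toReal
  have hV : C * volume K' ≤ ENNReal.ofReal (V + 1) := by
    rw [← ENNReal.ofReal_toReal (ENNReal.mul_ne_top hC hK'.measure_lt_top.ne)]
    exact ENNReal.ofReal_le_ofReal (by linarith)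
  have hV0 : 0 ≤ V := ENNReal.toReal_nonneg
  obtain ⟨n₀, hn₀⟩ := exists_eventually_lintegral_zetaTail_le hK' hK'D hc
    (by positivity : 0 < κ * η ^ 2 / (V + 1))
  refine ⟨n₀, fun n hn L θ hL hθ => ?_⟩
  filter_upwards [hn₀ n hn L θ hL hθ, eventually_ge_atTop 0] with T hT hT0
  set D : ℝ := ∏ k, (L k : ℝ)
  have hη2 : ENNReal.ofReal (η ^ 2) ≠ 0 := by simpa using hη.ne'
  rw [← ENNReal.mul_le_mul_iff_right hη2 ENNReal.ofReal_ne_top,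
    ← Measure.restrict_apply' measurableSet_Icc]
  calc _ ≤ C * (ENNReal.ofReal (κ * η ^ 2 / (V + 1) * D * T) * volume K') :=
        (hcheb n _).trans (by gcongr)
    _ ≤ ENNReal.ofReal (κ * η ^ 2 / (V + 1) * D * T) * ENNReal.ofReal (V + 1) := by
        rw [mul_left_comm]
        gcongr
    _ = ENNReal.ofReal (η ^ 2) * ENNReal.ofReal (κ * D * T) := by
        rw [← ENNReal.ofReal_mul (by positivity), ← ENNReal.ofReal_mul (by positivity)]
        congr 1
        field_simp

end UniformTail

/-! ### Positive density of good shifts -/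

section GoodShifts

variable {a b : ℤ} {η : ℝ} {K : Set ℂ}

/-- The shifts `t` in the `δ`-neighbourhood cut out by `θ k * nthPrimePhase k t ≈ 1` for which both
tails `zetaTail n (s + iat)` and `zetaTail n (s + ibt)` are smaller than `η` on `K`. -/
def goodShifts (a b : ℤ) (K : Set ℂ) (η : ℝ) {n : ℕ} (θ : Fin n → ℂ) (δ : ℝ) : Set ℝ :=
  {t | (∀ k, ‖θ k * nthPrimePhase k t - 1‖ < δ) ∧
    ∀ s ∈ K, ‖zetaTail n (s + (a * t : ℝ) * I)‖ < η ∧ ‖zetaTail n (s + (b * t : ℝ) * I)‖ < η}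

lemma subset_goodShifts_union (a b : ℤ) (K : Set ℂ) (η : ℝ) {n : ℕ} (θ : Fin n → ℂ) (δ : ℝ)
    (S : Set ℝ) :
    S ⊆ goodShifts a b K η θ δ ∩ S ∪ {t | ∃ k, δ ≤ ‖θ k * nthPrimePhase k t - 1‖} ∩ S ∪
      {t | ∃ s ∈ K, η ≤ ‖zetaTail n (s + (a * t : ℝ) * I)‖} ∩ S ∪
      {t | ∃ s ∈ K, η ≤ ‖zetaTail n (s + (b * t : ℝ) * I)‖} ∩ S := by
  intro t ht
  by_contra h
  simp only [Set.mem_union, Set.mem_inter_iff, ht, and_true, not_or, Set.mem_ofPred_eq,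
    not_exists, not_and, not_le] at h
  exact h.1.1.1 ⟨h.1.1.2, fun s hs => ⟨h.1.2 s hs, h.2 s hs⟩⟩

lemma exists_eventually_le_volume_goodShifts (hK : IsCompact K) (hKD : K ⊆ strip) (ha : a ≠ 0)
    (hb : b ≠ 0) (hη : 0 < η) :
    ∃ n, ∀ θ : Fin n → ℂ, (∀ k, ‖θ k‖ = 1) → ∀ δ > 0, ∃ c > 0, ∀ᶠ T : ℝ in atTop,
      ENNReal.ofReal (c * T) ≤ volume (goodShifts a b K η θ δ ∩ Set.Icc 0 T) := by
  have hκ : (0 : ℝ) < 1 / 12 := by norm_num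
  obtain ⟨nₐ, hₐ⟩ := exists_eventually_fejerMeasure_exists_le_norm_zetaTail_le hK hKD ha hη hκ
  obtain ⟨n_b, h_b⟩ := exists_eventually_fejerMeasure_exists_le_norm_zetaTail_le hK hKD hb hη hκ
  refine ⟨max nₐ n_b, fun θ hθ δ hδ => ?_⟩
  obtain ⟨L, hL, hphase⟩ := exists_eventually_fejerMeasure_exists_le_norm_sub_one_le hθ hδ hκ
  set D : ℝ := ∏ k, (L k : ℝ)
  have hD : 0 < D := Finset.prod_pos fun k _ => by exact_mod_cast (hL k).bot_lt
  refine ⟨1 / (4 * D), by positivity, ?_⟩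
  filter_upwards [eventually_le_fejerMeasure_Icc hL hθ, hphase,
    hₐ _ (le_max_left _ _) L θ hL hθ, h_b _ (le_max_right _ _) L θ hL hθ, eventually_ge_atTop 0]
    with T htotal hphaseT hₐT h_bT hT
  set G := goodShifts a b K η θ δ ∩ Set.Icc 0 T
  have hGfin : volume G ≠ ∞ :=
    measure_ne_top_of_subset Set.inter_subset_right measure_Icc_lt_top.ne
  have hsum := htotal.trans <|
    (measure_mono (subset_goodShifts_union a b K η θ δ _)).trans <|
    (measure_union_le _ _).trans <| add_le_add ((measure_union_le _ _).trans <|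
      add_le_add ((measure_union_le _ _).trans <|
        add_le_add (fejerMeasure_le hθ G) hphaseT) hₐT) h_bT
  rw [← ENNReal.ofReal_toReal hGfin] at hsum ⊢
  rw [← ENNReal.ofReal_mul (by positivity), ← ENNReal.ofReal_add (by positivity) (by positivity),
    ← ENNReal.ofReal_add (by positivity) (by positivity),
    ← ENNReal.ofReal_add (by positivity) (by positivity),
    ENNReal.ofReal_le_ofReal_iff (by positivity)] at hsum
  refine ENNReal.ofReal_le_ofReal ?_
  rw [div_mul_eq_mul_div, one_mul, div_le_iff₀ (by positivity)]
  exact le_of_mul_le_mul_left (by linarith) hD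

end GoodShifts

/-! ### Comparison of the two shifts -/

lemma exists_norm_eq_one_zpow_eq_zpow_ne_one {a b : ℤ} (hab : IsCoprime a b)
    (habne : |a - b| ≠ 1) : ∃ ω : ℂ, ‖ω‖ = 1 ∧ ω ^ a = ω ^ b ∧ ω ^ a ≠ 1 := by
  rcases eq_or_ne a b with rfl | hne
  · refine ⟨-1, by simp, rfl, ?_⟩
    rcases Int.isUnit_iff.1 (isCoprime_self.1 hab) with rfl | rfl <;> norm_num
  have hm : (a - b).natAbs ≠ 0 := by simpa [sub_eq_zero] using hne
  have hω := isPrimitiveRoot_exp _ hm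
  set ω := cexp (2 * Real.pi * I / (a - b).natAbs)
  have hdvd : ((a - b).natAbs : ℤ) ∣ a - b := Int.natAbs_dvd.2 dvd_rfl
  refine ⟨ω, hω.norm'_eq_one hm, ?_, fun h => habne ?_⟩
  · have h1 : ω ^ (a - b) = 1 := (hω.zpow_eq_one_iff_dvd _).2 hdvd
    rwa [zpow_sub₀ (exp_ne_zero _), div_eq_one_iff_eq (zpow_ne_zero _ (exp_ne_zero _))] at h1
  · have hdvd_a := (hω.zpow_eq_one_iff_dvd _).1 h
    have hdvd_b : ((a - b).natAbs : ℤ) ∣ b := by simpa using dvd_sub hdvd_a hdvd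
    simpa using Int.isUnit_iff_abs_eq.1 (hab.isUnit_of_dvd' hdvd_a hdvd_b)

lemma exists_forall_norm_twistedEulerProd_sub_lt (n : ℕ) (c : ℤ) {w : ℕ → ℂ}
    (hw : ∀ k, ‖w k‖ = 1) {K : Set ℂ} (hK : IsCompact K) (hKre : ∀ s ∈ K, 1 / 2 ≤ s.re) {η : ℝ}
    (hη : 0 < η) :
    ∃ δ > 0, ∀ x : ℕ → ℂ, (∀ k < n, ‖x k - w k‖ < δ) → ∀ s ∈ K,
      ‖twistedEulerProd n (fun k => x k ^ c) s - twistedEulerProd n (fun k => w k ^ c) s‖ < η := by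
  set F : (Fin n → ℂ) → ℂ → ℂ := fun x s => ∏ k : Fin n, (1 - x k ^ c * (nthPrime k : ℂ) ^ (-s))⁻¹
  have hF (x : ℕ → ℂ) (s : ℂ) : twistedEulerProd n (fun k => x k ^ c) s = F (fun k => x k) s :=
    Finset.prod_range _
  have hclose : ∀ᶠ x in nhds fun k : Fin n => w k, ∀ s ∈ K, ‖F x s - F (fun k => w k) s‖ < η := by
    refine hK.eventually_forall_of_forall_eventually fun s hs => ?_
    have hcont : ContinuousAt (fun p : (Fin n → ℂ) × ℂ => F p.1 p.2) (fun k => w k, s) := by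
      refine tendsto_finsetProd _ fun k _ => Tendsto.inv₀ ?_
        (one_sub_mul_nthPrime_cpow_ne_zero (by simp [hw]) k (hKre s hs))
      have hzpow : ContinuousAt (fun p : (Fin n → ℂ) × ℂ => p.1 k ^ c) (fun k => w k, s) :=
        ContinuousAt.zpow₀ (by fun_prop) c (.inl (norm_ne_zero_iff.1 (by simp [hw])))
      exact tendsto_const_nhds.sub <| hzpow.tendsto.mul <|
        ((continuous_natCast_cpow_neg (prime_nthPrime k).ne_zero).comp continuous_snd).tendsto _
    have hcont₀ : ContinuousAt (fun p : (Fin n → ℂ) × ℂ => F (fun k => w k) p.2)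
        (fun k => w k, s) :=
      ContinuousAt.comp (x := (fun k : Fin n => w k, s))
        (f := fun p : (Fin n → ℂ) × ℂ => (fun k : Fin n => w k, p.2)) hcont (by fun_prop)
    exact (hcont.sub hcont₀).norm.eventually_lt_const (by simpa using hη)
  obtain ⟨δ, hδ, hball⟩ := Metric.eventually_nhds_iff.1 hclose
  refine ⟨δ, hδ, fun x hx s hs => ?_⟩
  rw [hF, hF]
  exact hball ((dist_pi_lt_iff hδ).2 fun k => dist_eq_norm (x k) (w k) ▸ hx k k.2) s hs

lemma norm_one_add_mul_sub_one_add_mul_le {A : Type*} [SeminormedRing A] {u v p q z : A} {B η : ℝ}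
    (hη : η ≤ 1) (hz : ‖z‖ ≤ B) (hp : ‖p - z‖ ≤ η) (hq : ‖q - z‖ ≤ η) (hu : ‖u‖ ≤ η)
    (hv : ‖v‖ ≤ η) : ‖(1 + u) * p - (1 + v) * q‖ ≤ η * (4 + 2 * B) := by
  have hη0 : 0 ≤ η := (norm_nonneg u).trans hu
  have hmul {y r : A} (hy : ‖y‖ ≤ η) (hr : ‖r - z‖ ≤ η) : ‖y * r‖ ≤ η * (B + 1) :=
    (norm_mul_le y r).trans <| mul_le_mul hy
      (by linarith [norm_le_norm_add_norm_sub' r z]) (norm_nonneg _) hη0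
  calc ‖(1 + u) * p - (1 + v) * q‖ = ‖(u * p - v * q) + ((p - z) - (q - z))‖ := by
        congr 1; noncomm_ring
    _ ≤ (‖u * p‖ + ‖v * q‖) + (‖p - z‖ + ‖q - z‖) :=
        (norm_add_le _ _).trans (add_le_add (norm_sub_le _ _) (norm_sub_le _ _))
    _ ≤ η * (4 + 2 * B) := by linarith [hmul hu hp, hmul hv hq]

lemma riemannZeta_add_mul_I_eq_mul_twistedEulerProd (n : ℕ) (c : ℤ) (t : ℝ) {s : ℂ}
    (hs : 1 / 2 ≤ s.re) :
    riemannZeta (s + (c * t : ℝ) * I) = (1 + zetaTail n (s + (c * t : ℝ) * I)) *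
      twistedEulerProd n (fun k => nthPrimePhase k t ^ c) s := by
  have hne := twistedEulerProd_ne_zero (x := fun k => nthPrimePhase k t ^ c)
    (fun k => by simp [norm_nthPrimePhase]) n hs
  rw [← inv_eulerFactors_add_mul_I] at hne ⊢
  rw [zetaTail, add_sub_cancel, mul_assoc, mul_inv_cancel₀ (by simpa using hne), mul_one]

lemma exists_forall_norm_twistedEulerProd_sub_pow_lt {ω : ℂ} (hω : ‖ω‖ = 1) (n : ℕ) (c : ℤ)
    {K : Set ℂ} (hK : IsCompact K) (hKre : ∀ s ∈ K, 1 / 2 ≤ s.re) {η : ℝ} (hη : 0 < η) :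
    ∃ δ > 0, ∀ t : ℝ, (∀ k : Fin n, ‖(ω ^ (k : ℕ))⁻¹ * nthPrimePhase k t - 1‖ < δ) → ∀ s ∈ K,
      ‖twistedEulerProd n (fun k => nthPrimePhase k t ^ c) s -
        twistedEulerProd n ((ω ^ c) ^ ·) s‖ < η := by
  have hpow (k : ℕ) : ‖ω ^ k‖ = 1 := by rw [norm_pow, hω, one_pow]
  obtain ⟨δ, hδ, h⟩ := exists_forall_norm_twistedEulerProd_sub_lt n c hpow hK hKre hη
  refine ⟨δ, hδ, fun t ht s hs => ?_⟩
  have hclose (k) (hk : k < n) : ‖nthPrimePhase k t - ω ^ k‖ < δ := by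
    have hne : ω ^ k ≠ 0 := norm_ne_zero_iff.1 (by simp [hpow])
    calc ‖nthPrimePhase k t - ω ^ k‖ = ‖ω ^ k * ((ω ^ k)⁻¹ * nthPrimePhase k t - 1)‖ := by
          rw [mul_sub, mul_inv_cancel_left₀ hne, mul_one]
      _ < δ := by rw [norm_mul, hpow, one_mul]; exact ht ⟨k, hk⟩
  have hcomm : (fun k : ℕ => (ω ^ k) ^ c) = fun k => (ω ^ c) ^ k :=
    funext fun k => by rw [← zpow_natCast, ← zpow_natCast, zpow_comm]
  exact hcomm ▸ h _ hclose s hs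

lemma exists_eventually_le_volume_norm_riemannZeta_sub_le {a b : ℤ} (ha : a ≠ 0) (hb : b ≠ 0)
    (hab : IsCoprime a b) (habne : |a - b| ≠ 1) {K : Set ℂ} (hK : IsCompact K) (hKD : K ⊆ strip)
    {ε : ℝ} (hε : 0 < ε) :
    ∃ c > 0, ∀ᶠ T : ℝ in atTop, ENNReal.ofReal (c * T) ≤ volume ({t : ℝ | ∀ s ∈ K,
      ‖riemannZeta (s + (b * t : ℝ) * I) - riemannZeta (s + (a * t : ℝ) * I)‖ ≤ ε} ∩
        Set.Icc 0 T) := by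
  obtain ⟨ω, hω, hωab, hω1⟩ := exists_norm_eq_one_zpow_eq_zpow_ne_one hab habne
  obtain ⟨σ₁, σ₂, Y, h1, -, hbd⟩ := exists_forall_mem_re_im_of_isCompact hK hKD
  obtain ⟨R, hR⟩ := hK.isBounded.exists_norm_le
  obtain ⟨B, hB⟩ :=
    exists_forall_norm_twistedEulerProd_pow_le (by rw [norm_zpow, hω, one_zpow]) hω1 h1 R
  obtain ⟨η, hη, hηε⟩ : ∃ η : ℝ, 0 < η ∧ η ≤ 1 ∧ η * (4 + 2 * B) ≤ ε := by
    refine ⟨min 1 (ε / (4 + 2 * |B|)), lt_min one_pos (by positivity), min_le_left _ _, ?_⟩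
    calc min 1 (ε / (4 + 2 * |B|)) * (4 + 2 * B)
          ≤ min 1 (ε / (4 + 2 * |B|)) * (4 + 2 * |B|) := by
          gcongr
          exact le_abs_self B
      _ ≤ ε := (le_div_iff₀ (by positivity)).1 (min_le_right _ _)
  have hKre : ∀ s ∈ K, 1 / 2 ≤ s.re := fun s hs => (hKD hs).1.le
  obtain ⟨n, hn⟩ := exists_eventually_le_volume_goodShifts hK hKD ha hb hη
  obtain ⟨δₐ, hδₐ, hₐ⟩ := exists_forall_norm_twistedEulerProd_sub_pow_lt hω n a hK hKre hη
  obtain ⟨δ_b, hδ_b, h_b⟩ := exists_forall_norm_twistedEulerProd_sub_pow_lt hω n b hK hKre hη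
  obtain ⟨c, hc, hT⟩ := hn (fun k => (ω ^ (k : ℕ))⁻¹) (fun k => by simp [hω]) (min δₐ δ_b)
    (lt_min hδₐ hδ_b)
  refine ⟨c, hc, hT.mono fun T hT => hT.trans (measure_mono ?_)⟩
  refine Set.inter_subset_inter_left _ fun t ht s hs => ?_
  have hprodₐ := hₐ t (fun k => (ht.1 k).trans_le (min_le_left _ _)) s hs
  have hprod_b := h_b t (fun k => (ht.1 k).trans_le (min_le_right _ _)) s hs
  rw [← hωab] at hprod_b
  rw [riemannZeta_add_mul_I_eq_mul_twistedEulerProd n a t (hKre s hs),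
    riemannZeta_add_mul_I_eq_mul_twistedEulerProd n b t (hKre s hs)]
  exact (norm_one_add_mul_sub_one_add_mul_le hηε.1 (hB n s (hbd s hs).1.1 (hR s hs)) hprod_b.le
    hprodₐ.le (ht.2 s hs).2.le (ht.2 s hs).1.le).trans hηε.2

/-! ### Lower densities -/

lemma lowerDens_pos {S : Set ℝ} {c : ℝ} (hc : 0 < c)
    (h : ∀ᶠ T : ℝ in atTop, ENNReal.ofReal (c * T) ≤ volume (S ∩ Set.Icc 0 T)) :
    0 < lowerDens S := by
  have hle (T : ℝ) : volume (S ∩ Set.Icc 0 T) ≤ ENNReal.ofReal T :=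
    (measure_mono Set.inter_subset_right).trans (by simp)
  refine hc.trans_le (le_liminf_of_le (IsBoundedUnder.isCoboundedUnder_ge ⟨1, ?_⟩) ?_)
  · rw [eventually_map]
    filter_upwards [eventually_gt_atTop 0] with T hT
    exact (div_le_one hT).2 (ENNReal.toReal_le_of_le_ofReal hT.le (hle T))
  · filter_upwards [h, eventually_gt_atTop 0] with T hcT hT
    rw [le_div_iff₀ hT]
    exact (ENNReal.ofReal_le_iff_le_toReal
      (ne_top_of_le_ne_top ENNReal.ofReal_ne_top (hle T))).1 hcT

lemma lowerDens_preimage_mul_left {r : ℝ} (hr : 0 < r) (S : Set ℝ) :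
    lowerDens ((r * ·) ⁻¹' S) = lowerDens S := by
  have hvol (T : ℝ) : (volume ((r * ·) ⁻¹' S ∩ Set.Icc 0 T)).toReal / T =
      (volume (S ∩ Set.Icc 0 (r * T))).toReal / (r * T) := by
    have hIcc : Set.Icc 0 T = (r * ·) ⁻¹' Set.Icc 0 (r * T) := by
      rw [Set.preimage_const_mul_Icc₀ _ _ hr, zero_div, mul_div_cancel_left₀ T hr.ne']
    rw [hIcc, ← Set.preimage_inter, Real.volume_preimage_mul_left hr.ne',
      abs_of_pos (by positivity), ENNReal.toReal_mul, ENNReal.toReal_ofReal (by positivity)]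
    field_simp
  calc lowerDens ((r * ·) ⁻¹' S)
      = liminf (fun T : ℝ => (volume (S ∩ Set.Icc 0 (r * T))).toReal / (r * T)) atTop :=
        congrArg (liminf · atTop) (funext hvol)
    _ = liminf (fun T : ℝ => (volume (S ∩ Set.Icc 0 T)).toReal / T)
          (map (OrderIso.mulLeft₀ r hr) atTop) := rfl
    _ = lowerDens S := by rw [OrderIso.map_atTop, lowerDens]

lemma supNorm_le_ofReal {K : Set ℂ} {f : ℂ → ℂ} {r : ℝ} (h : ∀ s ∈ K, ‖f s‖ ≤ r) :
    supNorm K f ≤ ENNReal.ofReal r :=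
  iSup₂_le fun s hs => (ofReal_norm (f s)).symm.trans_le (ENNReal.ofReal_le_ofReal (h s hs))

lemma lowerDens_supNorm_riemannZeta_sub_pos {a b : ℤ} (ha : a ≠ 0) (hb : b ≠ 0)
    (hab : IsCoprime a b) (habne : |a - b| ≠ 1) {K : Set ℂ} (hK : IsCompact K) (hKD : K ⊆ strip)
    {ε : ℝ} (hε : 0 < ε) :
    0 < lowerDens {t : ℝ | supNorm K (fun s => riemannZeta (s + (b * t : ℝ) * I)
      - riemannZeta (s + (a * t : ℝ) * I)) < ENNReal.ofReal ε} := by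
  obtain ⟨c, hc, hT⟩ := exists_eventually_le_volume_norm_riemannZeta_sub_le ha hb hab habne hK hKD
    (half_pos hε)
  refine lowerDens_pos hc (hT.mono fun T hT => hT.trans (measure_mono ?_))
  exact Set.inter_subset_inter_left _ fun t ht => (supNorm_le_ofReal ht).trans_lt
    ((ENNReal.ofReal_lt_ofReal_iff hε).2 (half_lt_self hε))

theorem self_approx_zeta_rational (a b : ℤ) (ha : a ≠ 0) (hb : b ≠ 0)
    (hab : IsCoprime a b) (habne : |a - b| ≠ 1)
    (K : Set ℂ) (hK : IsCompact K) (hKD : K ⊆ strip) (ε : ℝ) (hε : 0 < ε) :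
    0 < lowerDens {τ : ℝ |
      supNorm K (fun s => riemannZeta (s + τ * Complex.I)
        - riemannZeta (s + (((a : ℝ) / (b : ℝ)) * τ : ℝ) * Complex.I)) < ENNReal.ofReal ε} := by
  wlog hpos : 0 < b generalizing a b
  · have hneg := this (-a) (-b) (neg_ne_zero.2 ha) (neg_ne_zero.2 hb) hab.neg_neg
      (by rwa [neg_sub_neg, abs_sub_comm]) (by omega)
    simpa only [Int.cast_neg, neg_div_neg_eq] using hneg
  have hbpos : (0 : ℝ) < b := Int.cast_pos.2 hpos
  have hdens := lowerDens_supNorm_riemannZeta_sub_pos ha hb hab habne hK hKD hε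
  rw [← lowerDens_preimage_mul_left (inv_pos.2 hbpos)] at hdens
  have hshift (τ : ℝ) : (b : ℝ) * ((b : ℝ)⁻¹ * τ) = τ := mul_inv_cancel_left₀ hbpos.ne' τ
  have hshift' (τ : ℝ) : (a : ℝ) * ((b : ℝ)⁻¹ * τ) = a / b * τ := by
    rw [← mul_assoc, ← div_eq_mul_inv]
  simpa only [Set.preimage_ofPred_eq, hshift, hshift'] using hdens
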